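/- Let J : ℝ → [0,∞) be a convex function, and let g : ℝ → [0,∞) be a measurable 2π-periodic function with g ∈ L¹(−π,π). Then for every pair of nonnegative measurable functions u, v : (−π,π) → [0,∞) such that ∫_{−π}^{π}∫_{−π}^{π} J(u(x) − v(y)) g(x−y) dx dy is finite, one has ∫_{−π}^{π}∫_{−π}^{π} J(u^{*}(x) − v^{*}(y)) g^{*per}(x−y) dx dy ≤ ∫_{−π}^{π}∫_{−π}^{π} J(u(x) − v(y)) g(x−y) dx dy. -/

import Mathlib

open MeasureTheory Real

/-- For a measurable set `A ⊂ ℝ` of finite measure, `A^* := (−|A|/2, |A|/2)`. -/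
noncomputable def symmSet (A : Set ℝ) : Set ℝ :=
  Set.Ioo (-((volume A).toReal / 2)) ((volume A).toReal / 2)

/-- Symmetric decreasing rearrangement of a (nonnegative) function on `(−π,π)`:
`u^*(x) := ∫₀^∞ χ_{{u>t}^*}(x) dt`. -/
noncomputable def symmRearr (u : ℝ → ℝ) : ℝ → ℝ := fun x =>
  ∫ t in Set.Ioi (0 : ℝ),
    (symmSet {y | y ∈ Set.Ioo (-π) π ∧ t < u y}).indicator (fun _ => (1 : ℝ)) x

/-- The `2π`-periodic extension of (the restriction to `[−π,π)` of) a function. -/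
noncomputable def periodize (f : ℝ → ℝ) : ℝ → ℝ := fun x =>
  f (x - 2 * π * (⌊(x + π) / (2 * π)⌋ : ℝ))

/-- The periodic rearrangement `f^{*per}`: the `2π`-periodic extension of `(f·χ_{(−π,π)})^*`. -/
noncomputable def perRearr (f : ℝ → ℝ) : ℝ → ℝ := periodize (symmRearr f)
section Pollard

set_option linter.unusedSectionVars false

variable {G : Type*} [AddCommGroup G] [TopologicalSpace G] [IsTopologicalAddGroup G]
  [CompactSpace G] [ConnectedSpace G] [SecondCountableTopology G] [T2Space G]
  [MeasurableSpace G] [BorelSpace G] (μ : Measure G) [μ.IsAddHaarMeasure]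

/-- The convolution of two indicator functions. -/
noncomputable def rep (A B : Set G) (z : G) : ℝ := μ.real {x | x ∈ A ∧ z - x ∈ B}

lemma rep_sets_meas {A B : Set G} (hA : MeasurableSet A) (hB : MeasurableSet B) (z : G) :
    MeasurableSet {x | x ∈ A ∧ z - x ∈ B} :=
  hA.inter ((measurable_const.sub measurable_id) hB)

lemma rep_nonneg (A B : Set G) (z : G) : 0 ≤ rep μ A B z := measureReal_nonneg

lemma measure_sub_left {B : Set G} (hB : MeasurableSet B) (z : G) :
    μ.real {x | z - x ∈ B} = μ.real B := by
  have : μ {x | z - x ∈ B} = μ B := by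
    have h := (Measure.measurePreserving_sub_left μ z).measure_preimage hB.nullMeasurableSet
    exact h
  simp [Measure.real, this]

lemma measure_sub_right {B : Set G} (hB : MeasurableSet B) (z : G) :
    μ.real {x | x - z ∈ B} = μ.real B := by
  have : μ {x | x - z ∈ B} = μ B := by
    have h := (measurePreserving_sub_right μ z).measure_preimage hB.nullMeasurableSet
    exact h
  simp [Measure.real, this]

lemma rep_le_left (A B : Set G) (z : G) : rep μ A B z ≤ μ.real A :=
  measureReal_mono (fun _ h => h.1)

lemma rep_le_right (A : Set G) {B : Set G} (hB : MeasurableSet B) (z : G) :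
    rep μ A B z ≤ μ.real B := by
  rw [← measure_sub_left μ hB z]
  exact measureReal_mono (fun _ h => h.2)

lemma rep_comm {A B : Set G} (hA : MeasurableSet A) (hB : MeasurableSet B) (z : G) :
    rep μ A B z = rep μ B A z := by
  unfold rep
  rw [← measure_sub_left μ (rep_sets_meas hB hA z) z]
  congr 1; ext x; simp [and_comm]

lemma rep_union {A A' B : Set G} (hA' : MeasurableSet A') (hB : MeasurableSet B)
    (hd : Disjoint A A') (z : G) :
    rep μ (A ∪ A') B z = rep μ A B z + rep μ A' B z := by
  unfold rep
  rw [← measureReal_union _ (rep_sets_meas hA' hB z)]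
  · congr 1; ext x; simp only [Set.mem_union, Set.mem_ofPred_eq]; tauto
  · rw [Set.disjoint_left] at hd ⊢
    exact fun x h h' => hd h.1 h'.1

lemma rep_meas {A B : Set G} (hA : MeasurableSet A) (hB : MeasurableSet B) :
    Measurable (rep μ A B) := by
  have hS : MeasurableSet {p : G × G | p.2 ∈ A ∧ p.1 - p.2 ∈ B} :=
    (measurable_snd hA).inter ((measurable_fst.sub measurable_snd) hB)
  exact (measurable_measure_prodMk_left (ν := μ) hS).ennreal_toReal

lemma rep_integrable {A B : Set G} (hA : MeasurableSet A) (hB : MeasurableSet B) :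
    Integrable (rep μ A B) μ := by
  refine Integrable.of_bound (rep_meas μ hA hB).aestronglyMeasurable (μ.real A) (.of_forall fun z => ?_)
  rw [Real.norm_of_nonneg (rep_nonneg ..)]
  exact rep_le_left ..

lemma rep_min_integrable {A B : Set G} (hA : MeasurableSet A) (hB : MeasurableSet B) (t : ℝ) :
    Integrable (fun z => min t (rep μ A B z)) μ :=
  (integrable_const t).inf (rep_integrable μ hA hB)

lemma integral_rep {A B : Set G} (hA : MeasurableSet A) (hB : MeasurableSet B) :
    ∫ z, rep μ A B z ∂μ = μ.real A * μ.real B := by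
  have h1 : ∀ z, rep μ A B z = ∫ x, A.indicator 1 x * B.indicator 1 (z - x) ∂μ := by
    intro z
    unfold rep
    rw [← integral_indicator_one (rep_sets_meas hA hB z)]
    congr 1; ext x
    by_cases h1 : x ∈ A <;> by_cases h2 : z - x ∈ B <;> simp [h1, h2]
  have hm : Measurable (fun p : G × G => A.indicator (1 : G → ℝ) p.2 * B.indicator 1 (p.1 - p.2)) :=
    ((measurable_one.indicator hA).comp measurable_snd).mul
      ((measurable_one.indicator hB).comp (measurable_fst.sub measurable_snd))
  simp_rw [h1]
  rw [integral_integral_swap]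
  · simp_rw [integral_const_mul]
    have : ∀ y, ∫ x, B.indicator (1 : G → ℝ) (x - y) ∂μ = μ.real B := by
      intro y
      rw [integral_sub_right_eq_self (B.indicator (1 : G → ℝ)) y, integral_indicator_one hB]
    simp_rw [this]
    rw [integral_mul_const, integral_indicator_one hA]
  · refine Integrable.of_bound hm.aestronglyMeasurable 1 (.of_forall fun p => ?_)
    dsimp [Function.uncurry]
    by_cases h1 : p.2 ∈ A <;> by_cases h2 : p.1 - p.2 ∈ B <;> simp [h1, h2]

lemma rep_cont {A B : Set G} (hB : MeasurableSet B) : Continuous (rep μ A B) := by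
  have hf : Continuous (fun z : G => (⟨fun x => z - x, by fun_prop⟩ : C(G, G))) := by
    apply ContinuousMap.continuous_of_continuous_uncurry
    exact continuous_fst.sub continuous_snd
  rw [continuous_iff_continuousAt]
  intro z
  have := tendsto_measure_symmDiff_preimage_nhds_zero (μ := μ) (ν := μ) (s := B) (hf.tendsto z)
    (.of_forall fun w => Measure.measurePreserving_sub_left μ w) (Measure.measurePreserving_sub_left μ z)
    hB.nullMeasurableSet (measure_ne_top _ _)
  have h2 := (ENNReal.tendsto_toReal ENNReal.zero_ne_top).comp this
  rw [ContinuousAt, tendsto_iff_dist_tendsto_zero]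
  refine squeeze_zero (fun _ => dist_nonneg) (fun w => ?_) h2
  have key : ∀ w z : G, rep μ A B w ≤ rep μ A B z + μ.real (symmDiff {x | w - x ∈ B} {x | z - x ∈ B}) := by
    intro w z
    refine le_trans (measureReal_mono ?_) (measureReal_union_le _ _)
    intro x hx
    by_cases h : z - x ∈ B
    · exact .inl ⟨hx.1, h⟩
    · exact .inr (.inl ⟨hx.2, h⟩)
  have k1 := key w z
  have k2 := key z w
  rw [symmDiff_comm] at k2
  rw [Real.dist_eq, abs_le]
  change _ ≤ _ ∧ _ ≤ μ.real (symmDiff {x | w - x ∈ B} {x | z - x ∈ B})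
  change -μ.real (symmDiff {x | w - x ∈ B} {x | z - x ∈ B}) ≤ _ ∧ _
  constructor <;> linarith

lemma exists_rep_eq {A B : Set G} (hA : MeasurableSet A) (hB : MeasurableSet B) :
    ∃ z, rep μ A B z = μ.real A * μ.real B / μ.real Set.univ := by
  have hav : ⨍ z, rep μ A B z ∂μ = μ.real A * μ.real B / μ.real Set.univ := by
    rw [average_eq, integral_rep μ hA hB, smul_eq_mul]; ring
  have h0 : μ ≠ 0 := NeZero.ne μ
  obtain ⟨x, hx⟩ := exists_le_average h0 (rep_integrable μ hA hB)
  obtain ⟨y, hy⟩ := exists_average_le h0 (rep_integrable μ hA hB)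
  rw [hav] at hx hy
  exact mem_range_of_exists_le_of_exists_ge (rep_cont μ hB) ⟨x, hx⟩ ⟨y, hy⟩

lemma exists_inter_eq {A B : Set G} (hA : MeasurableSet A) (hB : MeasurableSet B) :
    ∃ w : G, μ.real (A ∩ {y | y - w ∈ B}) = μ.real A * μ.real B / μ.real Set.univ := by
  have hB' : MeasurableSet {y | 0 - y ∈ B} := (measurable_const.sub measurable_id) hB
  obtain ⟨z, hz⟩ := exists_rep_eq μ hA hB'
  rw [measure_sub_left μ hB 0] at hz
  refine ⟨z, ?_⟩
  rw [← hz]; unfold rep; congr 1; ext x; simp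

lemma pollard_aux (ε : ℝ) (hε : 0 ≤ ε) (hε1 : ε ≤ 1) (n : ℕ) :
    ∀ (A B : Set G) (t : ℝ), MeasurableSet A → MeasurableSet B → 0 ≤ t → t ≤ μ.real A →
      t ≤ μ.real B → μ.real A + μ.real B - t ≤ μ.real Set.univ →
      t * (μ.real A + μ.real B - t) - ∫ z, min t (rep μ A B z) ∂μ ≤
        μ.real Set.univ * max (ε * μ.real Set.univ) ((1 - ε) ^ n * μ.real B) := by
  have hM : 0 < μ.real Set.univ := by
    rw [measureReal_def]; exact ENNReal.toReal_pos (by simp [NeZero.ne μ]) (measure_ne_top _ _)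
  -- trivial bounds
  have triv0 : ∀ (A B : Set G) (t : ℝ), MeasurableSet A → MeasurableSet B → 0 ≤ t → t ≤ μ.real A →
      t ≤ μ.real B → μ.real A + μ.real B - t ≤ μ.real Set.univ →
      t * (μ.real A + μ.real B - t) - ∫ z, min t (rep μ A B z) ∂μ ≤ μ.real Set.univ * t := by
    intro A B t hA hB ht hta htb hc
    have : 0 ≤ ∫ z, min t (rep μ A B z) ∂μ := integral_nonneg fun z => le_min ht (rep_nonneg ..)
    nlinarith
  have triv1 : ∀ (A B : Set G) (t : ℝ), MeasurableSet A → MeasurableSet B → 0 ≤ t → t ≤ μ.real A →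
      t ≤ μ.real B → μ.real A + μ.real B - t ≤ μ.real Set.univ →
      t * (μ.real A + μ.real B - t) - ∫ z, min t (rep μ A B z) ∂μ ≤
        μ.real Set.univ * (μ.real Set.univ - μ.real A) := by
    intro A B t hA hB ht hta htb hc
    have hAM : μ.real A ≤ μ.real Set.univ := measureReal_mono (Set.subset_univ _)
    rcases eq_or_lt_of_le (measureReal_nonneg (μ := μ) (s := B)) with hb | hb
    · have : t = 0 := by linarith
      subst this
      have : 0 ≤ ∫ z, min 0 (rep μ A B z) ∂μ := integral_nonneg fun z => le_min le_rfl (rep_nonneg ..)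
      nlinarith
    · have h1 : ∫ z, t / μ.real B * rep μ A B z ∂μ ≤ ∫ z, min t (rep μ A B z) ∂μ := by
        refine integral_mono ((rep_integrable μ hA hB).const_mul _) (rep_min_integrable μ hA hB t) ?_
        intro z
        have h2 := rep_le_right μ A hB z
        have h3 := rep_nonneg μ A B z
        apply le_min
        · show t / μ.real B * rep μ A B z ≤ t
          rw [div_mul_eq_mul_div, div_le_iff₀ hb]; gcongr
        · show t / μ.real B * rep μ A B z ≤ rep μ A B z
          have : t / μ.real B ≤ 1 := (div_le_one hb).2 htb
          nlinarith
      rw [integral_const_mul, integral_rep μ hA hB] at h1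
      have h2 : t / μ.real B * (μ.real A * μ.real B) = t * μ.real A := by field_simp
      rw [h2] at h1
      have h5 : t ≤ μ.real Set.univ := hta.trans hAM
      nlinarith
  induction n with
  | zero =>
    intro A B t hA hB ht hta htb hc
    refine (triv0 A B t hA hB ht hta htb hc).trans ?_
    gcongr
    simp [htb]
  | succ n ih =>
    intro A B t hA hB ht hta htb hc
    by_cases ha1 : μ.real A ≤ ε * μ.real Set.univ
    · refine (triv0 A B t hA hB ht hta htb hc).trans ?_
      gcongr
      exact (hta.trans ha1).trans (le_max_left _ _)
    by_cases ha2 : μ.real Set.univ - μ.real A ≤ ε * μ.real Set.univ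
    · refine (triv1 A B t hA hB ht hta htb hc).trans ?_
      gcongr
      exact ha2.trans (le_max_left _ _)
    push Not at ha1 ha2
    obtain ⟨w, hw⟩ := exists_inter_eq μ hA hB
    set B1 : Set G := {y | y - w ∈ B} with hB1
    have hB1m : MeasurableSet B1 := (measurable_id.sub measurable_const) hB
    have hb1 : μ.real B1 = μ.real B := measure_sub_right μ hB w
    have htr : ∫ z, min t (rep μ A B z) ∂μ = ∫ z, min t (rep μ A B1 z) ∂μ := by
      have : ∀ z, rep μ A B1 z = rep μ A B (z - w) := by
        intro z; unfold rep; congr 1; ext x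
        simp only [hB1, Set.mem_ofPred_eq]; rw [sub_right_comm]
      simp_rw [this]
      exact (integral_sub_right_eq_self (fun z => min t (rep μ A B z)) w).symm
    set I := A ∩ B1 with hI
    have hIm : MeasurableSet I := hA.inter hB1m
    set A' := A \ I
    set B' := B1 \ I
    have hA'm : MeasurableSet A' := hA.diff hIm
    have hB'm : MeasurableSet B' := hB1m.diff hIm
    have hAe : A = I ∪ A' := (Set.union_sdiff_cancel Set.inter_subset_left).symm
    have hBe : B1 = I ∪ B' := (Set.union_sdiff_cancel Set.inter_subset_right).symm
    have dA : Disjoint I A' := Set.disjoint_sdiff_right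
    have dB : Disjoint I B' := Set.disjoint_sdiff_right
    have dAB : Disjoint A B' := by
      rw [Set.disjoint_left]; intro x h1 h2; exact h2.2 ⟨h1, h2.1⟩
    have mA : μ.real A = μ.real I + μ.real A' := by
      conv_lhs => rw [hAe]
      exact measureReal_union dA hA'm
    have mB : μ.real B = μ.real I + μ.real B' := by
      rw [← hb1]
      conv_lhs => rw [hBe]
      exact measureReal_union dB hB'm
    set U := A ∪ B' with hU
    have hUm : MeasurableSet U := hA.union hB'm
    have mU : μ.real U = μ.real A + μ.real B' := measureReal_union dAB hB'm
    have hrep : ∀ z, rep μ A B1 z = rep μ U I z + rep μ A' B' z := by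
      intro z
      have e1 : rep μ A B1 z = rep μ I B1 z + rep μ A' B1 z := by
        conv_lhs => rw [hAe]
        exact rep_union μ hA'm hB1m dA z
      have e2 : rep μ A' B1 z = rep μ A' I z + rep μ A' B' z := by
        rw [rep_comm μ hA'm hB1m, rep_comm μ hA'm hIm, rep_comm μ hA'm hB'm]
        conv_lhs => rw [hBe]
        exact rep_union μ hB'm hA'm dB z
      have e3 : rep μ I B1 z = rep μ I I z + rep μ B' I z := by
        rw [rep_comm μ hIm hB1m]
        conv_lhs => rw [hBe]
        exact rep_union μ hB'm hIm dB z
      have e4 : rep μ U I z = rep μ A I z + rep μ B' I z := rep_union μ hB'm hIm dAB z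
      have e5 : rep μ A I z = rep μ I I z + rep μ A' I z := by
        conv_lhs => rw [hAe]
        exact rep_union μ hA'm hIm dA z
      linarith
    have hI0 : 0 ≤ μ.real I := measureReal_nonneg
    have hb0 : 0 ≤ μ.real B := measureReal_nonneg
    have hIeq : μ.real I * μ.real Set.univ = μ.real A * μ.real B := by
      rw [hw]; field_simp
    rw [htr]
    by_cases hit : μ.real I ≤ t
    · have := ih A' B' (t - μ.real I) hA'm hB'm (by linarith) (by linarith) (by linarith) (by linarith)
      have h1 : ∫ z, rep μ U I z + min (t - μ.real I) (rep μ A' B' z) ∂μ ≤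
          ∫ z, min t (rep μ A B1 z) ∂μ := by
        refine integral_mono ((rep_integrable μ hUm hIm).add (rep_min_integrable μ hA'm hB'm _))
          (rep_min_integrable μ hA hB1m t) ?_
        intro z
        simp only
        rw [hrep z]
        have k1 := rep_le_right μ U hIm z
        have k2 := min_le_left (t - μ.real I) (rep μ A' B' z)
        have k3 := min_le_right (t - μ.real I) (rep μ A' B' z)
        apply le_min <;> linarith
      rw [integral_add (rep_integrable μ hUm hIm) (rep_min_integrable μ hA'm hB'm _),
        integral_rep μ hUm hIm] at h1
      have h2 : t * (μ.real A + μ.real B - t) = μ.real U * μ.real I +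
        (t - μ.real I) * (μ.real A' + μ.real B' - (t - μ.real I)) := by
        rw [mU, mA, mB]; ring
      refine le_trans (by linarith) (this.trans ?_)
      have h3 : μ.real B' ≤ (1 - ε) * μ.real B := by
        have : (μ.real B - μ.real I) * μ.real Set.univ ≤ ((1 - ε) * μ.real B) * μ.real Set.univ := by
          nlinarith
        have := le_of_mul_le_mul_right this hM
        linarith
      have : 0 ≤ (1 - ε) ^ n := pow_nonneg (by linarith) _
      rw [pow_succ, mul_assoc]
      gcongr
    · push Not at hit
      have := ih U I t hUm hIm ht (by have : 0 ≤ μ.real B' := measureReal_nonneg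
                                      linarith) hit.le (by linarith)
      have h1 : ∫ z, min t (rep μ U I z) ∂μ ≤ ∫ z, min t (rep μ A B1 z) ∂μ := by
        refine integral_mono (rep_min_integrable μ hUm hIm _) (rep_min_integrable μ hA hB1m t) ?_
        intro z
        simp only
        rw [hrep z]
        have := rep_nonneg μ A' B' z
        gcongr
        linarith
      have h2 : μ.real U + μ.real I = μ.real A + μ.real B := by linarith
      rw [h2] at this
      refine le_trans (by linarith) (this.trans ?_)
      have h3 : μ.real I ≤ (1 - ε) * μ.real B := by
        have : μ.real I * μ.real Set.univ ≤ ((1 - ε) * μ.real B) * μ.real Set.univ := by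
          nlinarith
        exact le_of_mul_le_mul_right this hM
      have : 0 ≤ (1 - ε) ^ n := pow_nonneg (by linarith) _
      rw [pow_succ, mul_assoc]
      gcongr

lemma pollard {A B : Set G} {t : ℝ} (hA : MeasurableSet A) (hB : MeasurableSet B) (ht : 0 ≤ t)
    (hta : t ≤ μ.real A) (htb : t ≤ μ.real B)
    (hc : μ.real A + μ.real B - t ≤ μ.real Set.univ) :
    t * (μ.real A + μ.real B - t) ≤ ∫ z, min t (rep μ A B z) ∂μ := by
  rw [← sub_nonpos]
  set D := t * (μ.real A + μ.real B - t) - ∫ z, min t (rep μ A B z) ∂μ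
  have h1 : ∀ ε : ℝ, 0 < ε → ε < 1 → D ≤ μ.real Set.univ * (ε * μ.real Set.univ) := by
    intro ε h0 h1
    have hlim : Filter.Tendsto (fun n : ℕ => μ.real Set.univ * max (ε * μ.real Set.univ)
        ((1 - ε) ^ n * μ.real B)) Filter.atTop
        (nhds (μ.real Set.univ * max (ε * μ.real Set.univ) (0 * μ.real B))) := by
      refine (tendsto_const_nhds.max ?_).const_mul _
      exact (tendsto_pow_atTop_nhds_zero_of_lt_one (by linarith) (by linarith)).mul_const _
    have := ge_of_tendsto' hlim
      (fun n => pollard_aux μ ε h0.le h1.le n A B t hA hB ht hta htb hc)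
    rwa [zero_mul, max_eq_left (by positivity)] at this
  have hlim : Filter.Tendsto (fun ε : ℝ => μ.real Set.univ * (ε * μ.real Set.univ))
      (nhdsWithin 0 (Set.Ioi 0)) (nhds 0) := by
    have : Continuous (fun ε : ℝ => μ.real Set.univ * (ε * μ.real Set.univ)) := by fun_prop
    have := this.tendsto 0
    simp only [zero_mul, mul_zero] at this
    exact this.mono_left nhdsWithin_le_nhds
  refine ge_of_tendsto hlim ?_
  filter_upwards [Ioo_mem_nhdsGT (show (0 : ℝ) < 1 by norm_num)] with ε hε
  exact h1 ε hε.1 hε.2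

/-- Sharp upper bound for the convolution integrated over a set. -/
lemma rep_setIntegral_le {A B C : Set G} {t : ℝ} (hA : MeasurableSet A) (hB : MeasurableSet B)
    (hC : MeasurableSet C) (ht : 0 ≤ t)
    (hta : t ≤ μ.real A) (htb : t ≤ μ.real B)
    (hc : μ.real A + μ.real B - t ≤ μ.real Set.univ) :
    ∫ z in C, rep μ A B z ∂μ ≤ t * μ.real C + (μ.real A - t) * (μ.real B - t) := by
  have hp := pollard μ hA hB ht hta htb hc
  have i1 := rep_integrable μ hA hB
  have i2 := rep_min_integrable μ hA hB t
  have h1 : ∫ z in C, rep μ A B z ∂μ = ∫ z in C, min t (rep μ A B z) ∂μ +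
      ∫ z in C, (rep μ A B z - min t (rep μ A B z)) ∂μ := by
    have := integral_sub (μ := μ.restrict C) i1.integrableOn i2.integrableOn
    linarith
  have h2 : ∫ z in C, min t (rep μ A B z) ∂μ ≤ t * μ.real C := by
    have : ∫ z in C, min t (rep μ A B z) ∂μ ≤ ∫ z in C, t ∂μ :=
      integral_mono i2.integrableOn (integrable_const _) (fun z => min_le_left _ _)
    simpa [mul_comm] using this
  have h3 : ∫ z in C, (rep μ A B z - min t (rep μ A B z)) ∂μ ≤
      ∫ z, (rep μ A B z - min t (rep μ A B z)) ∂μ :=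
    setIntegral_le_integral (i1.sub i2) (.of_forall fun z => sub_nonneg.2 (min_le_right _ _))
  rw [integral_sub i1 i2, integral_rep μ hA hB] at h3
  nlinarith

end Pollard

section Circle

local instance factTwoPi : Fact (0 < 2 * π) := ⟨by positivity⟩

/-- The representative in `(-π, π]` of a point of the circle. -/
noncomputable def rp (q : AddCircle (2 * π)) : ℝ := (AddCircle.equivIoc (2 * π) (-π) q : ℝ)

lemma rp_meas : Measurable rp :=
  measurable_subtype_coe.comp (AddCircle.measurableEquivIoc (2 * π) (-π)).measurable

lemma rp_mem (q : AddCircle (2 * π)) : rp q ∈ Set.Ioc (-π) π := by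
  have h := (AddCircle.equivIoc (2 * π) (-π) q).2
  change rp q ∈ Set.Ioc (-π) (-π + 2 * π) at h
  exact ⟨h.1, h.2.trans (by linarith)⟩

lemma rp_coe {x : ℝ} (hx : x ∈ Set.Ioc (-π) π) : rp (x : AddCircle (2 * π)) = x := by
  apply AddCircle.equivIoc_coe_of_mem
  rwa [show -π + 2 * π = π by ring]

lemma coe_rp (q : AddCircle (2 * π)) : ((rp q : ℝ) : AddCircle (2 * π)) = q :=
  AddCircle.coe_equivIoc

lemma vol_univ : (volume : Measure (AddCircle (2 * π))).real Set.univ = 2 * π := by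
  rw [measureReal_def, AddCircle.measure_univ, ENNReal.toReal_ofReal (by positivity)]

lemma vol_eq {U : Set (AddCircle (2 * π))} (hU : MeasurableSet U) :
    volume U = volume ({x : ℝ | (x : AddCircle (2 * π)) ∈ U} ∩ Set.Ioo (-π) π) := by
  rw [AddCircle.add_projection_respects_measure (2 * π) (-π) hU, show -π + 2 * π = π by ring]
  apply measure_congr
  exact Filter.EventuallyEq.inter (Filter.EventuallyEq.rfl) Ioo_ae_eq_Ioc.symm

lemma vol_rp {A : Set ℝ} (hA : MeasurableSet A) :
    volume (rp ⁻¹' A) = volume (Set.Ioo (-π) π ∩ A) := by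
  rw [vol_eq (rp_meas hA)]
  congr 1; ext x
  simp only [Set.mem_inter_iff, Set.mem_preimage, Set.mem_ofPred_eq]
  constructor
  · rintro ⟨h1, h2⟩; rw [rp_coe (Set.Ioo_subset_Ioc_self h2)] at h1; exact ⟨h2, h1⟩
  · rintro ⟨h1, h2⟩; rw [rp_coe (Set.Ioo_subset_Ioc_self h1)]; exact ⟨h2, h1⟩

lemma lint_circle (F : AddCircle (2 * π) → ENNReal) :
    ∫⁻ x in Set.Ioo (-π) π, F x = ∫⁻ q, F q := by
  rw [← AddCircle.lintegral_preimage (2 * π) (-π), show -π + 2 * π = π by ring]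
  exact setLIntegral_congr Ioo_ae_eq_Ioc

/-- The trilinear form. -/
noncomputable def Trip (A B C : Set ℝ) : ENNReal :=
  ∫⁻ x in Set.Ioo (-π) π, ∫⁻ y in Set.Ioo (-π) π,
    A.indicator 1 x * B.indicator 1 y * C.indicator 1 (x - y)

lemma rp_periodic {C : Set ℝ} (hper : ∀ z, z + 2 * π ∈ C ↔ z ∈ C) (z : ℝ) :
    rp (z : AddCircle (2 * π)) ∈ C ↔ z ∈ C := by
  have h1 : ((rp (z : AddCircle (2 * π)) : ℝ) : AddCircle (2 * π)) = z := coe_rp _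
  have hp : Function.Periodic (fun z => z ∈ C) (2 * π) := fun z => propext (hper z)
  rw [← sub_eq_zero, ← AddCircle.coe_sub, AddCircle.coe_eq_zero_iff] at h1
  obtain ⟨n, hn⟩ := h1
  have h2 : rp (z : AddCircle (2 * π)) = z + n • (2 * π) := by linarith
  rw [h2]
  have := (hp.zsmul n) z
  exact iff_of_eq this

lemma trip_eq {A B C : Set ℝ} (hA : MeasurableSet A) (hB : MeasurableSet B) (hC : MeasurableSet C)
    (hper : ∀ z, z + 2 * π ∈ C ↔ z ∈ C) :
    Trip A B C = ENNReal.ofReal (∫ z in rp ⁻¹' C,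
      rep volume (rp ⁻¹' A) {q | -q ∈ rp ⁻¹' B} z) := by
  have hA' := rp_meas hA
  have hB' := rp_meas hB
  have hC' := rp_meas hC
  have hB'' : MeasurableSet {q : AddCircle (2 * π) | -q ∈ rp ⁻¹' B} := measurable_neg hB'
  have e1 : Trip A B C = ∫⁻ p, ∫⁻ q, (rp ⁻¹' A).indicator 1 p * (rp ⁻¹' B).indicator 1 q *
      (rp ⁻¹' C).indicator 1 (p - q) := by
    unfold Trip
    rw [← lint_circle]
    refine setLIntegral_congr_fun measurableSet_Ioo fun x hx => ?_
    rw [← lint_circle]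
    refine setLIntegral_congr_fun measurableSet_Ioo fun y hy => ?_
    have h1 := rp_coe (Set.Ioo_subset_Ioc_self hx)
    have h2 := rp_coe (Set.Ioo_subset_Ioc_self hy)
    have h3 := rp_periodic hper (x - y)
    rw [AddCircle.coe_sub] at h3
    have i1 : (rp ⁻¹' A).indicator (1 : AddCircle (2 * π) → ENNReal) x = A.indicator 1 x := by
      by_cases h : x ∈ A
      · rw [Set.indicator_of_mem h, Set.indicator_of_mem (by rwa [Set.mem_preimage, h1])]; rfl
      · rw [Set.indicator_of_notMem h, Set.indicator_of_notMem (by rwa [Set.mem_preimage, h1])]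
    have i2 : (rp ⁻¹' B).indicator (1 : AddCircle (2 * π) → ENNReal) y = B.indicator 1 y := by
      by_cases h : y ∈ B
      · rw [Set.indicator_of_mem h, Set.indicator_of_mem (by rwa [Set.mem_preimage, h2])]; rfl
      · rw [Set.indicator_of_notMem h, Set.indicator_of_notMem (by rwa [Set.mem_preimage, h2])]
    have i3 : (rp ⁻¹' C).indicator (1 : AddCircle (2 * π) → ENNReal) (x - y) =
        C.indicator 1 (x - y) := by
      by_cases h : x - y ∈ C
      · rw [Set.indicator_of_mem h, Set.indicator_of_mem (by rwa [Set.mem_preimage, h3])]; rfl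
      · rw [Set.indicator_of_notMem h, Set.indicator_of_notMem (by rwa [Set.mem_preimage, h3])]
    rw [i1, i2, i3]
  have e2 : ∀ p : AddCircle (2 * π), ∫⁻ q, (rp ⁻¹' A).indicator (1 : AddCircle (2 * π) → ENNReal) p *
      (rp ⁻¹' B).indicator 1 q * (rp ⁻¹' C).indicator 1 (p - q) =
      ∫⁻ z, (rp ⁻¹' C).indicator 1 z * {x | x ∈ rp ⁻¹' A ∧ z - x ∈ {q | -q ∈ rp ⁻¹' B}}.indicator
        (1 : AddCircle (2 * π) → ENNReal) p := by
    intro p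
    rw [← lintegral_sub_left_eq_self _ p]
    congr 1; ext z
    have : -(z - p) = p - z := by abel
    by_cases h1 : p ∈ rp ⁻¹' A <;> by_cases h2 : p - z ∈ rp ⁻¹' B <;>
      by_cases h3 : z ∈ rp ⁻¹' C <;> simp [h1, h2, h3] <;> simp_all
  have hm : Measurable (fun w : AddCircle (2 * π) × AddCircle (2 * π) =>
      (rp ⁻¹' C).indicator (1 : AddCircle (2 * π) → ENNReal) w.2 *
      {x | x ∈ rp ⁻¹' A ∧ w.2 - x ∈ {q | -q ∈ rp ⁻¹' B}}.indicator (1 : AddCircle (2 * π) → ENNReal) w.1) := by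
    refine ((measurable_one.indicator hC').comp measurable_snd).mul ?_
    have hS : MeasurableSet {p : AddCircle (2 * π) × AddCircle (2 * π) |
        p.1 ∈ rp ⁻¹' A ∧ p.2 - p.1 ∈ {q | -q ∈ rp ⁻¹' B}} :=
      (measurable_fst hA').inter ((measurable_snd.sub measurable_fst) hB'')
    exact (measurable_one (α := ENNReal)).indicator hS
  rw [e1]
  simp_rw [e2]
  rw [lintegral_lintegral_swap hm.aemeasurable]
  rw [← integral_indicator hC', ofReal_integral_eq_lintegral_ofReal
    ((rep_integrable volume hA' hB'').indicator hC')
    (.of_forall fun z => Set.indicator_nonneg (fun _ _ => rep_nonneg ..) z)]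
  congr 1; ext z
  rw [lintegral_const_mul _ (measurable_one.indicator (rep_sets_meas hA' hB'' z)),
    lintegral_indicator_one (rep_sets_meas hA' hB'' z)]
  by_cases h : z ∈ rp ⁻¹' C
  · rw [Set.indicator_of_mem h, Set.indicator_of_mem h]
    simp [rep, Measure.real]
  · rw [Set.indicator_of_notMem h, Set.indicator_of_notMem h]
    simp

/-- lower bound profile of the convolution of two arcs -/
noncomputable def prof (a b : ℝ) (z : ℝ) : ℝ :=
  max (max 0 (a + b - 2 * π)) (min (min a b) ((a + b) / 2 - |z|))

lemma prof_comm (a b z : ℝ) : prof a b z = prof b a z := by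
  simp only [prof, add_comm a b, min_comm a b]

lemma prof_cont (a b : ℝ) : Continuous (prof a b) := by unfold prof; fun_prop

lemma prof_integral (a b c : ℝ) (ha : 0 ≤ a) (hb : 0 ≤ b) (hc : 0 ≤ c) (ha' : a ≤ 2 * π)
    (hb' : b ≤ 2 * π) :
    prof a b (c / 2) * c + (a - prof a b (c / 2)) * (b - prof a b (c / 2)) ≤
      ∫ z in (-(c / 2))..(c / 2), prof a b z := by
  wlog hab : b ≤ a generalizing a b
  · have := this b a hb ha hb' ha' (le_of_not_ge hab)
    simp only [prof_comm b a] at this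
    linarith
  set t := prof a b (c / 2) with ht
  have hmono : ∀ z, |z| ≤ c / 2 → t ≤ prof a b z := by
    intro z hz
    rw [ht]; unfold prof
    rw [abs_of_nonneg (show 0 ≤ c / 2 by linarith)]
    gcongr
  have hII : ∀ x y, IntervalIntegrable (prof a b) volume x y :=
    fun x y => (prof_cont a b).intervalIntegrable x y
  have heven : ∫ z in (-(c / 2))..(c / 2), prof a b z = 2 * ∫ z in (0)..(c / 2), prof a b z := by
    have h1 : ∫ z in (-(c / 2))..0, prof a b z = ∫ z in (0)..(c / 2), prof a b z := by
      have := intervalIntegral.integral_comp_neg (a := 0) (b := c / 2) (prof a b)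
      rw [neg_zero] at this
      rw [← this]
      congr 1; ext z; simp [prof]
    rw [← intervalIntegral.integral_add_adjacent_intervals (hII _ 0) (hII 0 _), h1]; ring
  rw [heven]
  have htb : t ≤ b := by
    rw [ht]; unfold prof
    refine max_le (max_le hb (by linarith)) ?_
    exact (min_le_left _ _).trans (min_le_right _ _)
  have hconst : ∀ x y, 0 ≤ x → x ≤ y → y ≤ c / 2 → t * (y - x) ≤ ∫ z in x..y, prof a b z := by
    intro x y hx hxy hy
    have : ∫ z in x..y, t ≤ ∫ z in x..y, prof a b z := by
      refine intervalIntegral.integral_mono_on hxy (by simp) (hII _ _) ?_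
      intro z hz
      exact hmono z (by rw [abs_of_nonneg (hx.trans hz.1)]; exact hz.2.trans hy)
    simp at this
    linarith
  rcases eq_or_lt_of_le htb with htb' | htb'
  · have := hconst 0 (c / 2) le_rfl (by linarith) le_rfl
    have h2 : (a - t) * (b - t) = 0 := by rw [htb']; ring
    rw [h2]
    linarith
  · set e := (a + b) / 2 - t with he
    have hec : e ≤ c / 2 := by
      have h1 : min (min a b) ((a + b) / 2 - |c / 2|) ≤ t := le_max_right _ _
      rw [min_eq_right hab, abs_of_nonneg (show 0 ≤ c / 2 by linarith)] at h1
      rcases min_le_iff.1 h1 with h | h <;> linarith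
    have hae : (a - b) / 2 ≤ e := by linarith
    have i1 : b * ((a - b) / 2) ≤ ∫ z in (0)..((a - b) / 2), prof a b z := by
      have : ∫ z in (0)..((a - b) / 2), b ≤ ∫ z in (0)..((a - b) / 2), prof a b z := by
        refine intervalIntegral.integral_mono_on (by linarith) (by simp) (hII _ _) ?_
        intro z hz
        refine le_trans ?_ (le_max_right _ _)
        rw [min_eq_right hab, abs_of_nonneg hz.1]
        exact le_min le_rfl (by linarith [hz.2])
      simp at this
      linarith
    have i2 : (a + b) / 2 * (e - (a - b) / 2) - (e ^ 2 - ((a - b) / 2) ^ 2) / 2 ≤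
        ∫ z in ((a - b) / 2)..e, prof a b z := by
      have : ∫ z in ((a - b) / 2)..e, ((a + b) / 2 - z) ≤ ∫ z in ((a - b) / 2)..e, prof a b z := by
        refine intervalIntegral.integral_mono_on hae
          ((by fun_prop : Continuous fun z : ℝ => (a + b) / 2 - z).intervalIntegrable _ _) (hII _ _) ?_
        intro z hz
        have hz0 : 0 ≤ z := by linarith [hz.1]
        refine le_trans ?_ (le_max_right _ _)
        rw [min_eq_right hab, abs_of_nonneg hz0]
        exact le_min (by linarith [hz.1]) le_rfl
      rw [intervalIntegral.integral_sub (by simp) (by simp)] at this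
      simp at this
      linarith
    have i3 := hconst e (c / 2) (by linarith) hec le_rfl
    rw [← intervalIntegral.integral_add_adjacent_intervals (hII 0 e) (hII e _),
      ← intervalIntegral.integral_add_adjacent_intervals (hII 0 ((a - b) / 2)) (hII _ e)]
    rw [he] at i2 i3 ⊢
    nlinarith

lemma arc_rep {a b : ℝ} (ha : 0 ≤ a) (hb : 0 ≤ b) (ha' : a ≤ 2 * π)
    (hb' : b ≤ 2 * π) (ζ : ℝ) :
    prof a b ζ ≤ rep volume (rp ⁻¹' (Set.Ioo (-(a / 2)) (a / 2)))
      {q | -q ∈ rp ⁻¹' (Set.Ioo (-(b / 2)) (b / 2))} (ζ : AddCircle (2 * π)) := by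
  have hA := rp_meas (measurableSet_Ioo (a := -(a / 2)) (b := a / 2))
  have hB := rp_meas (measurableSet_Ioo (a := -(b / 2)) (b := b / 2))
  have hB'' : MeasurableSet {q : AddCircle (2 * π) | -q ∈ rp ⁻¹' (Set.Ioo (-(b / 2)) (b / 2))} :=
    measurable_neg hB
  set A' := rp ⁻¹' (Set.Ioo (-(a / 2)) (a / 2)) with hA'
  set B' := rp ⁻¹' (Set.Ioo (-(b / 2)) (b / 2)) with hB'
  have vI : ∀ {d : ℝ}, 0 ≤ d → d ≤ 2 * π → volume.real (rp ⁻¹' (Set.Ioo (-(d / 2)) (d / 2))) = d := by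
    intro d h0 h1
    rw [measureReal_def, vol_rp measurableSet_Ioo, Set.inter_eq_right.2, Real.volume_Ioo,
      ENNReal.toReal_ofReal] <;> [skip; linarith; (apply Set.Ioo_subset_Ioo <;> linarith)]
    ring
  have hset : {x | x ∈ A' ∧ (ζ : AddCircle (2 * π)) - x ∈ {q | -q ∈ B'}} =
      A' ∩ {x | x - (ζ : AddCircle (2 * π)) ∈ B'} := by
    ext x; simp
  have hBm : MeasurableSet {x | x - (ζ : AddCircle (2 * π)) ∈ B'} :=
    (measurable_id.sub measurable_const) hB
  unfold rep prof
  rw [hset]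
  refine max_le (max_le measureReal_nonneg ?_) ?_
  · have h1 := measureReal_union_add_inter (μ := volume) (s := A') (t := {x | x - (ζ : AddCircle (2 * π)) ∈ B'}) hBm
    rw [measure_sub_right volume hB, vI ha ha', vI hb hb'] at h1
    have h2 : volume.real (A' ∪ {x | x - (ζ : AddCircle (2 * π)) ∈ B'}) ≤ 2 * π := by
      exact (measureReal_mono (Set.subset_univ _)).trans_eq vol_univ
    linarith
  · rw [measureReal_def, vol_eq (hA.inter hBm)]
    have hsub : Set.Ioo (max (-(a / 2)) (ζ - b / 2)) (min (a / 2) (ζ + b / 2)) ⊆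
        {x : ℝ | (x : AddCircle (2 * π)) ∈ A' ∩ {x | x - (ζ : AddCircle (2 * π)) ∈ B'}} ∩
          Set.Ioo (-π) π := by
      intro x hx
      obtain ⟨h1, h2⟩ := hx
      rw [max_lt_iff] at h1
      rw [lt_min_iff] at h2
      have hxI : x ∈ Set.Ioo (-π) π := ⟨by linarith, by linarith⟩
      refine ⟨⟨?_, ?_⟩, hxI⟩
      · rw [hA', Set.mem_preimage, rp_coe (Set.Ioo_subset_Ioc_self hxI)]; exact ⟨h1.1, h2.1⟩
      · rw [hB', Set.mem_ofPred_eq, Set.mem_preimage, ← AddCircle.coe_sub, rp_coe ⟨by linarith, by linarith⟩]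
        exact ⟨by linarith, by linarith⟩
    have h1 := measure_mono (μ := volume) hsub
    rw [Real.volume_Ioo] at h1
    have h2 : volume ({x : ℝ | (x : AddCircle (2 * π)) ∈ A' ∩ {x | x - (ζ : AddCircle (2 * π)) ∈ B'}} ∩
          Set.Ioo (-π) π) ≠ ⊤ :=
      ne_top_of_le_ne_top (by simp) (measure_mono Set.inter_subset_right)
    have h3 := (ENNReal.ofReal_le_iff_le_toReal h2).1 h1
    refine le_trans ?_ h3
    rcases le_total (a / 2) (ζ + b / 2) with h | h <;>
    rcases le_total (-(a / 2)) (ζ - b / 2) with h' | h' <;>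
    simp only [h, h', min_eq_left, min_eq_right, max_eq_left, max_eq_right]
    · exact (min_le_right _ _).trans (by linarith [le_abs_self ζ])
    · exact (min_le_left _ _).trans ((min_le_left _ _).trans (by linarith))
    · exact (min_le_left _ _).trans ((min_le_right _ _).trans (by linarith))
    · exact (min_le_right _ _).trans (by linarith [neg_abs_le ζ])

/-- periodization of a set -/
def perSet (C : Set ℝ) : Set ℝ := {z | z - 2 * π * (⌊(z + π) / (2 * π)⌋ : ℝ) ∈ C}

lemma perSet_meas {C : Set ℝ} (hC : MeasurableSet C) : MeasurableSet (perSet C) := by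
  have : Measurable (fun z : ℝ => z - 2 * π * (⌊(z + π) / (2 * π)⌋ : ℝ)) := by fun_prop
  exact this hC

lemma perSet_per (C : Set ℝ) (z : ℝ) : z + 2 * π ∈ perSet C ↔ z ∈ perSet C := by
  have hpi : 0 < 2 * π := by positivity
  have : (z + 2 * π + π) / (2 * π) = (z + π) / (2 * π) + 1 := by field_simp; ring
  simp only [perSet, Set.mem_ofPred_eq]
  rw [this, Int.floor_add_one]
  push_cast
  ring_nf

lemma rp_perSet {c : ℝ} (hc : c ≤ 2 * π) :
    rp ⁻¹' (perSet (Set.Ioo (-(c / 2)) (c / 2))) = rp ⁻¹' (Set.Ioo (-(c / 2)) (c / 2)) := by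
  have hpi : 0 < 2 * π := by positivity
  ext q
  have hq := rp_mem q
  simp only [Set.mem_preimage, perSet, Set.mem_ofPred_eq]
  rcases eq_or_lt_of_le hq.2 with h | h
  · rw [h]
    have : ⌊(π + π) / (2 * π)⌋ = 1 := by
      rw [show (π + π) / (2 * π) = 1 by field_simp; ring]; simp
    rw [this]
    simp only [Int.cast_one, Set.mem_Ioo]
    constructor <;> rintro ⟨h1, h2⟩ <;> linarith
  · have : ⌊(rp q + π) / (2 * π)⌋ = 0 := by
      rw [Int.floor_eq_zero_iff]
      exact ⟨div_nonneg (by linarith [hq.1]) hpi.le, (div_lt_one hpi).2 (by linarith)⟩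
    rw [this]; simp

lemma symm_bound (A : Set ℝ) : 0 ≤ (volume (Set.Ioo (-π) π ∩ A)).toReal ∧
    (volume (Set.Ioo (-π) π ∩ A)).toReal ≤ 2 * π := by
  refine ⟨ENNReal.toReal_nonneg, ?_⟩
  refine (ENNReal.toReal_mono (b := volume (Set.Ioo (-π) π)) (by simp) (measure_mono Set.inter_subset_left)).trans ?_
  rw [Real.volume_Ioo, ENNReal.toReal_ofReal] <;> linarith [Real.pi_pos]

/-- Riesz rearrangement inequality on the circle, for sets. -/
lemma riesz {A B C : Set ℝ} (hA : MeasurableSet A) (hB : MeasurableSet B) (hC : MeasurableSet C)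
    (hper : ∀ z, z + 2 * π ∈ C ↔ z ∈ C) :
    Trip A B C ≤ Trip (symmSet (Set.Ioo (-π) π ∩ A)) (symmSet (Set.Ioo (-π) π ∩ B))
      (perSet (symmSet (Set.Ioo (-π) π ∩ C))) := by
  obtain ⟨ha, ha'⟩ := symm_bound A
  obtain ⟨hb, hb'⟩ := symm_bound B
  obtain ⟨hc, hc'⟩ := symm_bound C
  unfold symmSet
  rw [trip_eq hA hB hC hper, trip_eq measurableSet_Ioo measurableSet_Ioo
    (perSet_meas measurableSet_Ioo) (perSet_per _)]
  apply ENNReal.ofReal_le_ofReal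
  have mA : volume.real (rp ⁻¹' A) = (volume (Set.Ioo (-π) π ∩ A)).toReal := by
    rw [measureReal_def, vol_rp hA]
  have mB : volume.real (rp ⁻¹' B) = (volume (Set.Ioo (-π) π ∩ B)).toReal := by
    rw [measureReal_def, vol_rp hB]
  have mC : volume.real (rp ⁻¹' C) = (volume (Set.Ioo (-π) π ∩ C)).toReal := by
    rw [measureReal_def, vol_rp hC]
  rw [← mA] at ha ha' ⊢
  rw [← mB] at hb hb' ⊢
  rw [← mC] at hc hc' ⊢
  set a := volume.real (rp ⁻¹' A) with hadef
  set b := volume.real (rp ⁻¹' B) with hbdef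
  set c := volume.real (rp ⁻¹' C) with hcdef
  have hB'' : MeasurableSet {q : AddCircle (2 * π) | -q ∈ rp ⁻¹' B} := measurable_neg (rp_meas hB)
  have mB'' : volume.real {q : AddCircle (2 * π) | -q ∈ rp ⁻¹' B} = b := by
    have := measure_sub_left volume (rp_meas hB) 0
    simpa using this
  set t := prof a b (c / 2) with ht
  have up := rep_setIntegral_le volume (t := t) (rp_meas hA) hB'' (rp_meas hC)
    ((le_max_left _ _).trans (le_max_left _ _))
    (by rw [ht]; exact max_le (max_le ha (by linarith)) ((min_le_left _ _).trans (min_le_left _ _)))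
    (by rw [mB'', ht]; exact max_le (max_le hb (by linarith)) ((min_le_left _ _).trans (min_le_right _ _)))
    (by rw [mB'', vol_univ]
        have : a + b - 2 * π ≤ t := (le_max_right _ _).trans (le_max_left _ _)
        linarith)
  rw [mB''] at up
  refine up.trans ((prof_integral a b c ha hb hc ha' hb').trans ?_)
  rw [rp_perSet hc']
  have hmA := rp_meas (measurableSet_Ioo (a := -(a / 2)) (b := a / 2))
  have hmB : MeasurableSet {q : AddCircle (2 * π) | -q ∈ rp ⁻¹' (Set.Ioo (-(b / 2)) (b / 2))} :=
    measurable_neg (rp_meas measurableSet_Ioo)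
  have hmC := rp_meas (measurableSet_Ioo (a := -(c / 2)) (b := c / 2))
  rw [← integral_indicator hmC, ← AddCircle.integral_preimage (2 * π) (-π), show -π + 2 * π = π by ring]
  have hsub : Set.Ioo (-(c / 2)) (c / 2) ⊆ Set.Ioc (-π) π :=
    (Set.Ioo_subset_Ioo (by linarith) (by linarith)).trans Set.Ioo_subset_Ioc_self
  have hcong : ∀ x ∈ Set.Ioc (-π) π, (rp ⁻¹' Set.Ioo (-(c / 2)) (c / 2)).indicator
      (rep volume (rp ⁻¹' Set.Ioo (-(a / 2)) (a / 2)) {q | -q ∈ rp ⁻¹' Set.Ioo (-(b / 2)) (b / 2)})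
      (x : AddCircle (2 * π)) = (Set.Ioo (-(c / 2)) (c / 2)).indicator (fun x : ℝ =>
      rep volume (rp ⁻¹' Set.Ioo (-(a / 2)) (a / 2)) {q | -q ∈ rp ⁻¹' Set.Ioo (-(b / 2)) (b / 2)}
      (x : AddCircle (2 * π))) x := by
    intro x hx
    by_cases h : x ∈ Set.Ioo (-(c / 2)) (c / 2)
    · rw [Set.indicator_of_mem h, Set.indicator_of_mem (by rwa [Set.mem_preimage, rp_coe hx])]
    · rw [Set.indicator_of_notMem h, Set.indicator_of_notMem (by rwa [Set.mem_preimage, rp_coe hx])]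
  rw [setIntegral_congr_fun measurableSet_Ioc hcong, setIntegral_indicator measurableSet_Ioo,
    Set.inter_eq_right.2 hsub, intervalIntegral.integral_of_le (by linarith),
    integral_Ioc_eq_integral_Ioo]
  refine setIntegral_mono_on ?_ ?_ measurableSet_Ioo ?_
  · exact ((prof_cont a b).integrableOn_Icc).mono_set Set.Ioo_subset_Icc_self
  · refine Integrable.of_bound
      ((rep_meas volume hmA hmB).comp AddCircle.measurable_mk').aestronglyMeasurable
      (volume.real (rp ⁻¹' Set.Ioo (-(a / 2)) (a / 2))) (.of_forall fun z => ?_)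
    rw [Real.norm_of_nonneg (rep_nonneg ..)]
    exact rep_le_left ..
  · intro x _
    exact arc_rep ha hb ha' hb' x

end Circle

section Supermodular

/-- Domination in the supermodular order with equal marginals. -/
structure Dom (R R' : Measure (ℝ × ℝ)) : Prop where
  fin : R Set.univ ≠ ⊤
  h0 : R Set.univ = R' Set.univ
  h1 : ∀ s, R {p | s < p.1} = R' {p | s < p.1}
  h2 : ∀ s, R {p | s < p.2} = R' {p | s < p.2}
  h3 : ∀ s t, R {p | s < p.1 ∧ t < p.2} ≤ R' {p | s < p.1 ∧ t < p.2}

lemma Dom.swap {R R' : Measure (ℝ × ℝ)} (h : Dom R R') :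
    Dom (R.map Prod.swap) (R'.map Prod.swap) := by
  have m1 : ∀ s : ℝ, MeasurableSet {p : ℝ × ℝ | s < p.1} := fun s =>
    measurableSet_lt measurable_const measurable_fst
  have m2 : ∀ s : ℝ, MeasurableSet {p : ℝ × ℝ | s < p.2} := fun s =>
    measurableSet_lt measurable_const measurable_snd
  refine ⟨?_, ?_, fun s => ?_, fun s => ?_, fun s t => ?_⟩
  · rw [Measure.map_apply measurable_swap MeasurableSet.univ]; exact h.fin
  · rw [Measure.map_apply measurable_swap MeasurableSet.univ,
      Measure.map_apply measurable_swap MeasurableSet.univ]; exact h.h0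
  · rw [Measure.map_apply measurable_swap (m1 s), Measure.map_apply measurable_swap (m1 s)]
    exact h.h2 s
  · rw [Measure.map_apply measurable_swap (m2 s), Measure.map_apply measurable_swap (m2 s)]
    exact h.h1 s
  · have m3 : MeasurableSet {p : ℝ × ℝ | s < p.1 ∧ t < p.2} := by measurability
    rw [Measure.map_apply measurable_swap m3, Measure.map_apply measurable_swap m3]
    have e : Prod.swap ⁻¹' {p : ℝ × ℝ | s < p.1 ∧ t < p.2} =
      {p : ℝ × ℝ | t < p.1 ∧ s < p.2} := by
      ext p; exact and_comm
    rw [e]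
    exact h.h3 t s

lemma Dom.quad {R R' : Measure (ℝ × ℝ)} (h : Dom R R') (s t : ℝ) :
    R' {p | s < p.1 ∧ p.2 ≤ t} ≤ R {p | s < p.1 ∧ p.2 ≤ t} := by
  have key : ∀ Q : Measure (ℝ × ℝ), Q {p | s < p.1 ∧ t < p.2} + Q {p | s < p.1 ∧ p.2 ≤ t}
      = Q {p | s < p.1} := by
    intro Q
    rw [← measure_inter_add_sdiff (μ := Q) {p | s < p.1}
      (measurableSet_lt measurable_const measurable_snd : MeasurableSet {p : ℝ × ℝ | t < p.2})]
    congr 2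
    ext p
    simp
  have f1 : R' {p | s < p.1 ∧ t < p.2} ≠ ⊤ :=
    ne_top_of_le_ne_top (h.h0 ▸ h.fin) (measure_mono (Set.subset_univ _))
  have e1 := key R
  have e2 := key R'
  rw [h.h1 s, ← e2] at e1
  refine (ENNReal.add_le_add_iff_left f1).1 ?_
  rw [← e1]
  exact add_le_add (h.h3 s t) le_rfl

lemma hinge_eq (R : Measure (ℝ × ℝ)) [SFinite R] (l : ℝ) :
    ∫⁻ p, ENNReal.ofReal (p.1 - p.2 - l) ∂(R) = ∫⁻ s : ℝ, R {p | s < p.1 ∧ p.2 ≤ s - l} := by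
  have hS : MeasurableSet {q : (ℝ × ℝ) × ℝ | q.2 < q.1.1 ∧ q.1.2 ≤ q.2 - l} :=
    by measurability
  have e1 := Measure.prod_apply (μ := R) (ν := (volume : Measure ℝ)) hS
  have e2 := Measure.prod_apply_symm (μ := R) (ν := (volume : Measure ℝ)) hS
  rw [e1] at e2
  refine Eq.trans ?_ e2
  refine lintegral_congr fun p => ?_
  have : Prod.mk p ⁻¹' {q : (ℝ × ℝ) × ℝ | q.2 < q.1.1 ∧ q.1.2 ≤ q.2 - l} =
      Set.Ico (p.2 + l) p.1 := by
    ext s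
    simp only [Set.mem_preimage, Set.mem_ofPred_eq, Set.mem_Ico]
    constructor <;> rintro ⟨a, b⟩ <;> constructor <;> linarith
  rw [this, Real.volume_Ico]
  congr 1; ring

lemma Dom.hinge {R R' : Measure (ℝ × ℝ)} [SFinite R] [SFinite R'] (h : Dom R R') (l : ℝ) :
    ∫⁻ p, ENNReal.ofReal (p.1 - p.2 - l) ∂(R') ≤ ∫⁻ p, ENNReal.ofReal (p.1 - p.2 - l) ∂(R) := by
  rw [hinge_eq, hinge_eq]
  exact lintegral_mono fun s => h.quad s _

/-- convex function as a superposition of volumes -/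
lemma conv_layer {h : ℝ → ℝ} (hc : ConvexOn ℝ Set.univ h) (hn : ∀ t, 0 ≤ h t) {t0 : ℝ}
    (ht0 : h t0 = 0) : ∃ k : ℝ → ℝ, Monotone k ∧ ∀ t, ENNReal.ofReal (h (max t t0)) =
      ∫⁻ τ : ℝ, volume {σ : ℝ | t0 < σ ∧ σ < t ∧ 0 < τ ∧ τ < k σ} := by
  set k : ℝ → ℝ := fun x => derivWithin h (Set.Ioi x) x with hk
  have kmono : Monotone k := by
    have := hc.monotoneOn_rightDeriv
    rw [interior_univ] at this
    exact monotoneOn_univ.1 this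
  have k0 : 0 ≤ k t0 := by
    rw [hk]
    simp only
    rw [hc.rightDeriv_eq_sInf_slope_of_mem_interior (by simp)]
    apply Real.sInf_nonneg
    rintro _ ⟨y, hy, rfl⟩
    have hy' : t0 < y := by simpa using hy
    rw [slope_def_field, ht0]
    exact div_nonneg (by linarith [hn y]) (by linarith)
  refine ⟨k, kmono, fun t => ?_⟩
  have hS : MeasurableSet {q : ℝ × ℝ | t0 < q.1 ∧ q.1 < t ∧ 0 < q.2 ∧ q.2 < k q.1} := by
    have hkm := kmono.measurable
    clear_value k
    clear hk
    measurability
  have e1 := Measure.prod_apply (μ := (volume : Measure ℝ)) (ν := (volume : Measure ℝ)) hS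
  have e2 := Measure.prod_apply_symm (μ := (volume : Measure ℝ)) (ν := (volume : Measure ℝ)) hS
  rw [e1] at e2
  refine Eq.trans ?_ e2
  have e3 : ∀ σ : ℝ, volume (Prod.mk σ ⁻¹'
      {q : ℝ × ℝ | t0 < q.1 ∧ q.1 < t ∧ 0 < q.2 ∧ q.2 < k q.1}) =
      (Set.Ioo t0 t).indicator (fun σ => ENNReal.ofReal (k σ)) σ := by
    intro σ
    by_cases hσ : σ ∈ Set.Ioo t0 t
    · rw [Set.indicator_of_mem hσ]
      have : Prod.mk σ ⁻¹' {q : ℝ × ℝ | t0 < q.1 ∧ q.1 < t ∧ 0 < q.2 ∧ q.2 < k q.1} =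
          Set.Ioo 0 (k σ) := by
        ext τ
        simp only [Set.mem_preimage, Set.mem_ofPred_eq, Set.mem_Ioo]
        exact ⟨fun x => x.2.2, fun x => ⟨hσ.1, hσ.2, x⟩⟩
      rw [this, Real.volume_Ioo, sub_zero]
    · rw [Set.indicator_of_notMem hσ]
      have : Prod.mk σ ⁻¹' {q : ℝ × ℝ | t0 < q.1 ∧ q.1 < t ∧ 0 < q.2 ∧ q.2 < k q.1} = ∅ := by
        ext τ
        simp only [Set.mem_preimage, Set.mem_ofPred_eq, Set.mem_empty_iff_false, iff_false]
        exact fun x => hσ ⟨x.1, x.2.1⟩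
      rw [this, measure_empty]
  rw [lintegral_congr e3, lintegral_indicator measurableSet_Ioo]
  rcases le_total t t0 with htt | htt
  · rw [max_eq_right htt, ht0, Set.Ioo_eq_empty (by simpa using htt)]
    simp
  · rw [max_eq_left htt]
    have hII : IntervalIntegrable k volume t0 t := kmono.intervalIntegrable
    have hcont : Continuous h := by
      have := hc.continuousOn_interior
      rw [interior_univ] at this
      exact continuousOn_univ.1 this
    have ftc := intervalIntegral.integral_eq_sub_of_hasDeriv_right (f := h) (f' := k)
      (a := t0) (b := t) hcont.continuousOn
      (fun x _ => hc.hasDerivWithinAt_rightDeriv_of_mem_interior (by simp)) hII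
    rw [ht0, sub_zero, intervalIntegral.integral_of_le htt, integral_Ioc_eq_integral_Ioo] at ftc
    rw [← ftc, ofReal_integral_eq_lintegral_ofReal]
    · exact ((intervalIntegrable_iff_integrableOn_Ioc_of_le htt).1 hII).mono_set
        Set.Ioo_subset_Ioc_self
    · refine (ae_restrict_mem measurableSet_Ioo).mono fun x hx => ?_
      exact k0.trans (kmono hx.1.le)

lemma upset_vol (k : ℝ → ℝ) (hk : Monotone k) (t0 τ : ℝ) :
    (∀ t, volume {σ : ℝ | t0 < σ ∧ σ < t ∧ 0 < τ ∧ τ < k σ} = 0) ∨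
    ∃ l, ∀ t, volume {σ : ℝ | t0 < σ ∧ σ < t ∧ 0 < τ ∧ τ < k σ} = ENNReal.ofReal (t - l) := by
  set E : Set ℝ := {σ | t0 < σ ∧ 0 < τ ∧ τ < k σ} with hE
  rcases E.eq_empty_or_nonempty with he | he
  · left
    intro t
    have : {σ : ℝ | t0 < σ ∧ σ < t ∧ 0 < τ ∧ τ < k σ} = ∅ := by
      ext σ
      simp only [Set.mem_ofPred_eq, Set.mem_empty_iff_false, iff_false]
      rintro ⟨a, b, c, d⟩
      have : σ ∈ E := ⟨a, c, d⟩
      rw [he] at this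
      exact this
    rw [this, measure_empty]
  · right
    have hb : BddBelow E := ⟨t0, fun σ hσ => hσ.1.le⟩
    refine ⟨sInf E, fun t => le_antisymm ?_ ?_⟩
    · rw [← Real.volume_Ico]
      apply measure_mono
      rintro σ ⟨a, b, c, d⟩
      exact ⟨csInf_le hb ⟨a, c, d⟩, b⟩
    · rw [← Real.volume_Ioo]
      apply measure_mono
      rintro σ ⟨a, b⟩
      obtain ⟨ρ, ⟨h1, h2, h3⟩, h4⟩ := exists_lt_of_csInf_lt he a
      exact ⟨h1.trans h4, b, h2, h3.trans_le (hk h4.le)⟩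

lemma Dom.right {R R' : Measure (ℝ × ℝ)} [SFinite R] [SFinite R'] (hd : Dom R R')
    {h : ℝ → ℝ} (hc : ConvexOn ℝ Set.univ h) (hn : ∀ t, 0 ≤ h t) {t0 : ℝ} (ht0 : h t0 = 0) :
    ∫⁻ p, ENNReal.ofReal (h (max (p.1 - p.2) t0)) ∂(R') ≤
      ∫⁻ p, ENNReal.ofReal (h (max (p.1 - p.2) t0)) ∂(R) := by
  obtain ⟨k, hk, hl⟩ := conv_layer hc hn ht0
  simp only [hl]
  have hkm := hk.measurable
  have hS : MeasurableSet {q : ((ℝ × ℝ) × ℝ) × ℝ |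
      t0 < q.2 ∧ q.2 < q.1.1.1 - q.1.1.2 ∧ 0 < q.1.2 ∧ q.1.2 < k q.2} := by
    measurability
  have hm : Measurable (Function.uncurry fun (p : ℝ × ℝ) (τ : ℝ) =>
      volume {σ : ℝ | t0 < σ ∧ σ < p.1 - p.2 ∧ 0 < τ ∧ τ < k σ}) :=
    measurable_measure_prodMk_left (ν := (volume : Measure ℝ)) hS
  rw [lintegral_lintegral_swap hm.aemeasurable, lintegral_lintegral_swap hm.aemeasurable]
  refine lintegral_mono fun τ => ?_
  rcases upset_vol k hk t0 τ with h0 | ⟨l, hl⟩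
  · simp only [h0, lintegral_zero, le_refl]
  · simp only [hl]
    exact hd.hinge l

lemma Dom.vanish {R R' : Measure (ℝ × ℝ)} [SFinite R] [SFinite R'] (hd : Dom R R')
    {h : ℝ → ℝ} (hc : ConvexOn ℝ Set.univ h) (hn : ∀ t, 0 ≤ h t) {t0 : ℝ} (ht0 : h t0 = 0) :
    ∫⁻ p, ENNReal.ofReal (h (p.1 - p.2)) ∂(R') ≤ ∫⁻ p, ENNReal.ofReal (h (p.1 - p.2)) ∂(R) := by
  have hcont : Continuous h := by
    have := hc.continuousOn_interior
    rw [interior_univ] at this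
    exact continuousOn_univ.1 this
  have hm := hcont.measurable
  have r1 := hd.right hc hn ht0
  have hc2 : ConvexOn ℝ Set.univ (fun t => h (-t)) := by
    have := hc.comp_linearMap (-LinearMap.id : ℝ →ₗ[ℝ] ℝ)
    simpa [Function.comp_def] using this
  have r2 := hd.swap.right hc2 (fun t => hn _) (t0 := -t0) (by simpa using ht0)
  rw [lintegral_map (by fun_prop) measurable_swap, lintegral_map (by fun_prop) measurable_swap] at r2
  have split : ∀ p : ℝ × ℝ, ENNReal.ofReal (h (p.1 - p.2)) =
      ENNReal.ofReal (h (max (p.1 - p.2) t0)) +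
      ENNReal.ofReal (h (-(max (p.swap.1 - p.swap.2) (-t0)))) := by
    intro p
    simp only [Prod.fst_swap, Prod.snd_swap]
    rcases le_total (p.1 - p.2) t0 with hh | hh
    · rw [max_eq_right hh, max_eq_left (by linarith), ht0, ENNReal.ofReal_zero, zero_add, neg_sub]
    · rw [max_eq_left hh, max_eq_right (by linarith), neg_neg, ht0, ENNReal.ofReal_zero, add_zero]
  simp only [split]
  rw [lintegral_add_left (by fun_prop), lintegral_add_left (by fun_prop)]
  exact add_le_add r1 r2

theorem Dom.convex {R R' : Measure (ℝ × ℝ)} [SFinite R] [SFinite R'] (hd : Dom R R')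
    {J : ℝ → ℝ} (hc : ConvexOn ℝ Set.univ J) (hn : ∀ t, 0 ≤ J t) :
    ∫⁻ p, ENNReal.ofReal (J (p.1 - p.2)) ∂(R') ≤ ∫⁻ p, ENNReal.ofReal (J (p.1 - p.2)) ∂(R) := by
  have hcont : Continuous J := by
    have := hc.continuousOn_interior
    rw [interior_univ] at this
    exact continuousOn_univ.1 this
  have hb : BddBelow (Set.range J) := ⟨0, by rintro _ ⟨t, rfl⟩; exact hn t⟩
  have key : ∀ ε : ℝ, 0 < ε → ∫⁻ p, ENNReal.ofReal (J (p.1 - p.2)) ∂(R') ≤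
      ∫⁻ p, ENNReal.ofReal (J (p.1 - p.2)) ∂(R) + ENNReal.ofReal ε * R Set.univ := by
    intro ε hε
    obtain ⟨_, ⟨t0, rfl⟩, ht0⟩ := exists_lt_of_csInf_lt (Set.range_nonempty J)
      (show sInf (Set.range J) < sInf (Set.range J) + ε by linarith)
    have hlow : ∀ t, J t0 - ε ≤ J t := fun t => by
      have := csInf_le hb ⟨t, rfl⟩
      linarith
    set c := J t0 with hcdef
    have hcn : 0 ≤ c := hn t0
    have hconv : ConvexOn ℝ Set.univ (fun t => max (J t) c - c) :=
      (hc.sup (convexOn_const c convex_univ)).sub (concaveOn_const c convex_univ)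
    have hv := hd.vanish hconv (fun t => by simp) (t0 := t0) (by simp [hcdef])
    have hmeas : Measurable J := hcont.measurable
    have eq : ∀ t, ENNReal.ofReal (max (J t) c) =
        ENNReal.ofReal (max (J t) c - c) + ENNReal.ofReal c := by
      intro t
      rw [← ENNReal.ofReal_add (by simp) hcn, sub_add_cancel]
    calc ∫⁻ p, ENNReal.ofReal (J (p.1 - p.2)) ∂(R')
        ≤ ∫⁻ p, ENNReal.ofReal (max (J (p.1 - p.2)) c) ∂(R') :=
          lintegral_mono fun p => ENNReal.ofReal_le_ofReal (le_max_left _ _)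
      _ = ∫⁻ p, ENNReal.ofReal (max (J (p.1 - p.2)) c - c) ∂(R') + ENNReal.ofReal c * R' Set.univ := by
          simp only [eq]
          rw [lintegral_add_right _ measurable_const, lintegral_const]
      _ ≤ ∫⁻ p, ENNReal.ofReal (max (J (p.1 - p.2)) c - c) ∂(R) + ENNReal.ofReal c * R Set.univ := by
          rw [hd.h0]; exact add_le_add hv le_rfl
      _ = ∫⁻ p, ENNReal.ofReal (max (J (p.1 - p.2)) c) ∂(R) := by
          simp only [eq]
          rw [lintegral_add_right _ measurable_const, lintegral_const]
      _ ≤ ∫⁻ p, (ENNReal.ofReal (J (p.1 - p.2)) + ENNReal.ofReal ε) ∂(R) := by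
          refine lintegral_mono fun p => ?_
          rw [← ENNReal.ofReal_add (hn _) hε.le]
          refine ENNReal.ofReal_le_ofReal (max_le (by linarith) ?_)
          linarith [hlow (p.1 - p.2)]
      _ = _ := by
          rw [lintegral_add_right _ measurable_const, lintegral_const]
  have hlim : Filter.Tendsto (fun ε : ℝ => ∫⁻ p, ENNReal.ofReal (J (p.1 - p.2)) ∂(R) +
      ENNReal.ofReal ε * R Set.univ) (nhdsWithin 0 (Set.Ioi 0))
      (nhds (∫⁻ p, ENNReal.ofReal (J (p.1 - p.2)) ∂(R) + ENNReal.ofReal 0 * R Set.univ)) := by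
    refine Filter.Tendsto.const_add _ (ENNReal.Tendsto.mul_const ?_ (Or.inr hd.fin))
    exact (ENNReal.continuous_ofReal.tendsto 0).mono_left nhdsWithin_le_nhds
  rw [ENNReal.ofReal_zero, zero_mul, add_zero] at hlim
  exact ge_of_tendsto hlim (Filter.eventually_of_mem self_mem_nhdsWithin fun ε hε => key ε hε)

end Supermodular

section Final

attribute [local instance] factTwoPi

lemma mem_symmSet (A : Set ℝ) (x : ℝ) : x ∈ symmSet A ↔ 2 * |x| < (volume A).toReal := by
  unfold symmSet
  rw [Set.mem_Ioo, ← abs_lt]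
  constructor <;> intro h <;> linarith

lemma lev_fin (u : ℝ → ℝ) (t : ℝ) : volume (Set.Ioo (-π) π ∩ {y | t < u y}) ≠ ⊤ :=
  ne_top_of_le_ne_top (b := volume (Set.Ioo (-π) π)) (by simp) (measure_mono Set.inter_subset_left)

lemma lev_anti (u : ℝ → ℝ) :
    Antitone fun t => (volume (Set.Ioo (-π) π ∩ {y | t < u y})).toReal := by
  intro s t hst
  refine ENNReal.toReal_mono (lev_fin u s) (measure_mono ?_)
  rintro y ⟨h1, h2⟩
  exact ⟨h1, lt_of_le_of_lt hst h2⟩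

lemma lev_right {u : ℝ → ℝ} {c s : ℝ} (hc : 0 ≤ c)
    (h : c < (volume (Set.Ioo (-π) π ∩ {y | s < u y})).toReal) :
    ∃ s' > s, c < (volume (Set.Ioo (-π) π ∩ {y | s' < u y})).toReal := by
  rw [← ENNReal.ofReal_lt_iff_lt_toReal hc (lev_fin u s)] at h
  have e : Set.Ioo (-π) π ∩ {y | s < u y} =
      ⋃ n : ℕ, Set.Ioo (-π) π ∩ {y | s + 1 / ((n : ℝ) + 1) < u y} := by
    ext y
    simp only [Set.mem_inter_iff, Set.mem_iUnion, Set.mem_ofPred_eq]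
    constructor
    · rintro ⟨h1, h2⟩
      obtain ⟨n, hn⟩ := exists_nat_one_div_lt (sub_pos.2 h2)
      exact ⟨n, h1, by linarith⟩
    · rintro ⟨n, h1, h2⟩
      have : 0 < 1 / ((n : ℝ) + 1) := by positivity
      exact ⟨h1, by linarith⟩
  have hm : Monotone fun n : ℕ => Set.Ioo (-π) π ∩ {y | s + 1 / ((n : ℝ) + 1) < u y} := by
    rintro n m hnm y ⟨h1, h2⟩
    simp only [Set.mem_ofPred_eq] at h2
    refine ⟨h1, ?_⟩
    simp only [Set.mem_ofPred_eq]
    have : 1 / ((m : ℝ) + 1) ≤ 1 / ((n : ℝ) + 1) := Nat.one_div_le_one_div hnm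
    linarith
  rw [e, hm.measure_iUnion, lt_iSup_iff] at h
  obtain ⟨n, hn⟩ := h
  refine ⟨s + 1 / ((n : ℝ) + 1), ?_, ?_⟩
  · have : 0 < 1 / ((n : ℝ) + 1) := by positivity
    linarith
  · rwa [← ENNReal.ofReal_lt_iff_lt_toReal hc (lev_fin u _)]

lemma lev_zero {u : ℝ → ℝ} (hu : Measurable u) {c : ℝ} (hc : 0 < c) :
    ∃ T, (volume (Set.Ioo (-π) π ∩ {y | T < u y})).toReal < c := by
  have ht := tendsto_measure_iInter_atTop (μ := (volume : Measure ℝ))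
    (s := fun n : ℕ => Set.Ioo (-π) π ∩ {y | (n : ℝ) < u y})
    (fun n => (measurableSet_Ioo.inter (measurableSet_lt measurable_const hu)).nullMeasurableSet)
    (by
      rintro n m hnm y ⟨h1, h2⟩
      have h3 : (n : ℝ) ≤ m := Nat.cast_le.2 hnm
      have h4 : (m : ℝ) < u y := h2
      exact ⟨h1, h3.trans_lt h4⟩) ⟨0, lev_fin u _⟩
  have e : (⋂ n : ℕ, Set.Ioo (-π) π ∩ {y | (n : ℝ) < u y}) = ∅ := by
    ext y
    simp only [Set.mem_iInter, Set.mem_inter_iff, Set.mem_ofPred_eq, Set.mem_empty_iff_false,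
      iff_false]
    intro h
    obtain ⟨n, hn⟩ := exists_nat_gt (u y)
    linarith [(h n).2]
  rw [e, measure_empty] at ht
  obtain ⟨n, hn⟩ := (ht.eventually (gt_mem_nhds (ENNReal.ofReal_pos.2 hc))).exists
  refine ⟨n, ?_⟩
  have := (ENNReal.toReal_lt_toReal (lev_fin u n) ENNReal.ofReal_ne_top).2 hn
  rwa [ENNReal.toReal_ofReal hc.le] at this

lemma rearr_eq (u : ℝ → ℝ) (x : ℝ) : symmRearr u x = volume.real
    {t | 0 < t ∧ 2 * |x| < (volume (Set.Ioo (-π) π ∩ {y | t < u y})).toReal} := by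
  unfold symmRearr
  have hm : MeasurableSet
      {t | 2 * |x| < (volume (Set.Ioo (-π) π ∩ {y | t < u y})).toReal} :=
    measurableSet_lt measurable_const (lev_anti u).measurable
  have : (fun t : ℝ => (symmSet {y | y ∈ Set.Ioo (-π) π ∧ t < u y}).indicator
      (fun _ => (1 : ℝ)) x) =
      {t | 2 * |x| < (volume (Set.Ioo (-π) π ∩ {y | t < u y})).toReal}.indicator
      (fun _ => (1 : ℝ)) := by
    ext t
    by_cases h : x ∈ symmSet (Set.Ioo (-π) π ∩ {y | t < u y})
    · have h2 : t ∈ {t | 2 * |x| < (volume (Set.Ioo (-π) π ∩ {y | t < u y})).toReal} :=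
        (mem_symmSet _ _).1 h
      rw [Set.indicator_of_mem h2]
      exact Set.indicator_of_mem h _
    · have h2 : t ∉ {t | 2 * |x| < (volume (Set.Ioo (-π) π ∩ {y | t < u y})).toReal} :=
        fun h' => h ((mem_symmSet _ _).2 h')
      rw [Set.indicator_of_notMem h2]
      exact Set.indicator_of_notMem h _
  rw [this, setIntegral_indicator hm]
  simp only [integral_const, smul_eq_mul, mul_one]
  rw [measureReal_restrict_apply MeasurableSet.univ, Set.univ_inter]
  rfl

lemma rearr_nonneg (u : ℝ → ℝ) (x : ℝ) : 0 ≤ symmRearr u x := by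
  rw [rearr_eq]; exact measureReal_nonneg

lemma rearr_meas (u : ℝ → ℝ) : Measurable (symmRearr u) := by
  have : symmRearr u = fun x => (volume
    {t | 0 < t ∧ 2 * |x| < (volume (Set.Ioo (-π) π ∩ {y | t < u y})).toReal}).toReal := by
    ext x; rw [rearr_eq]; rfl
  rw [this]
  have hm := (lev_anti u).measurable
  have hS : MeasurableSet {q : ℝ × ℝ | 0 < q.2 ∧ 2 * |q.1| <
      (fun t => (volume (Set.Ioo (-π) π ∩ {y | t < u y})).toReal) q.2} := by
    generalize (fun t => (volume (Set.Ioo (-π) π ∩ {y | t < u y})).toReal) = m at hm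
    exact MeasurableSet.inter (s₁ := {q : ℝ × ℝ | 0 < q.2}) (s₂ := {q : ℝ × ℝ | 2 * |q.1| < m q.2})
      (measurableSet_lt (by fun_prop) (by fun_prop))
      (measurableSet_lt (by fun_prop) (by fun_prop))
  exact (measurable_measure_prodMk_left (ν := (volume : Measure ℝ)) hS).ennreal_toReal

lemma level_pos {u : ℝ → ℝ} (hu : Measurable u) {x : ℝ} (hx : x ≠ 0) {s : ℝ} (hs : 0 ≤ s) :
    s < symmRearr u x ↔ x ∈ symmSet (Set.Ioo (-π) π ∩ {y | s < u y}) := by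
  rw [mem_symmSet, rearr_eq]
  have hx' : 0 < 2 * |x| := by positivity
  constructor
  · intro h
    by_contra hcon
    have hcon' := not_lt.1 hcon
    have hsub : {t | 0 < t ∧ 2 * |x| < (volume (Set.Ioo (-π) π ∩ {y | t < u y})).toReal} ⊆
        Set.Ioo 0 s := by
      rintro t ⟨h1, h2⟩
      refine ⟨h1, ?_⟩
      by_contra hts
      have := lev_anti u (not_lt.1 hts)
      simp only at this
      linarith
    have := measureReal_mono (μ := (volume : Measure ℝ)) hsub (by simp)
    rw [Real.volume_real_Ioo_of_le hs] at this
    linarith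
  · intro h
    obtain ⟨s', hs', h'⟩ := lev_right hx'.le h
    obtain ⟨T, hT⟩ := lev_zero hu hx'
    have hsub : Set.Ioo 0 s' ⊆
        {t | 0 < t ∧ 2 * |x| < (volume (Set.Ioo (-π) π ∩ {y | t < u y})).toReal} := by
      rintro t ⟨h1, h2⟩
      exact ⟨h1, h'.trans_le (lev_anti u h2.le)⟩
    have hsub2 : {t | 0 < t ∧ 2 * |x| < (volume (Set.Ioo (-π) π ∩ {y | t < u y})).toReal} ⊆
        Set.Ioo 0 T := by
      rintro t ⟨h1, h2⟩
      refine ⟨h1, ?_⟩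
      by_contra hts
      have := lev_anti u (not_lt.1 hts)
      simp only at this
      linarith
    have := measureReal_mono (μ := (volume : Measure ℝ)) hsub
      (ne_top_of_le_ne_top (by simp) (measure_mono hsub2))
    rw [Real.volume_real_Ioo_of_le (hs.trans hs'.le)] at this
    linarith

lemma level_all {u : ℝ → ℝ} (hu : Measurable u) (hu0 : ∀ x, 0 ≤ u x) {x : ℝ}
    (hxI : x ∈ Set.Ioo (-π) π) (hx : x ≠ 0) (s : ℝ) :
    s < symmRearr u x ↔ x ∈ symmSet (Set.Ioo (-π) π ∩ {y | s < u y}) := by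
  rcases le_or_gt 0 s with hs | hs
  · exact level_pos hu hx hs
  · refine iff_of_true (hs.trans_le (rearr_nonneg u x)) ?_
    have : Set.Ioo (-π) π ∩ {y | s < u y} = Set.Ioo (-π) π :=
      Set.inter_eq_left.2 fun y _ => hs.trans_le (hu0 y)
    rw [mem_symmSet, this, Real.volume_Ioo, ENNReal.toReal_ofReal (by linarith [Real.pi_pos])]
    have := abs_lt.2 hxI
    linarith

/-- the measure on the square carried by `x - y ∈ C` -/
noncomputable def QM (C : Set ℝ) : Measure (ℝ × ℝ) :=
  ((volume.restrict (Set.Ioo (-π) π)).prod (volume.restrict (Set.Ioo (-π) π))).restrict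
    {p | p.1 - p.2 ∈ C}

instance QM_fin (C : Set ℝ) : IsFiniteMeasure (QM C) := by
  unfold QM; infer_instance

lemma sub_meas {C : Set ℝ} (hC : MeasurableSet C) :
    MeasurableSet {p : ℝ × ℝ | p.1 - p.2 ∈ C} :=
  (measurable_fst.sub measurable_snd) hC

lemma QM_trip {A B C : Set ℝ} (hA : MeasurableSet A) (hB : MeasurableSet B)
    (hC : MeasurableSet C) : QM C (A ×ˢ B) = Trip A B C := by
  unfold QM Trip
  have hAB := (hA.prod hB).inter (sub_meas hC)
  rw [Measure.restrict_apply (hA.prod hB), Measure.prod_apply hAB]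
  refine lintegral_congr fun x => ?_
  rw [← lintegral_indicator_one (measurable_prodMk_left hAB)]
  refine lintegral_congr fun y => ?_
  by_cases h1 : x ∈ A
  · by_cases h2 : y ∈ B
    · by_cases h3 : x - y ∈ C
      · rw [Set.indicator_of_mem h1, Set.indicator_of_mem h2, Set.indicator_of_mem h3,
          Set.indicator_of_mem (show y ∈ Prod.mk x ⁻¹' (A ×ˢ B ∩ {p | p.1 - p.2 ∈ C}) from
            ⟨⟨h1, h2⟩, h3⟩)]
        simp
      · rw [Set.indicator_of_notMem h3, mul_zero]
        exact Set.indicator_of_notMem (fun h => h3 h.2) _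
    · rw [Set.indicator_of_notMem h2, mul_zero, zero_mul]
      exact Set.indicator_of_notMem (fun h => h2 h.1.2) _
  · rw [Set.indicator_of_notMem h1, zero_mul, zero_mul]
    exact Set.indicator_of_notMem (fun h => h1 h.1.1) _

lemma trip_congr {A A' B B' : Set ℝ} (C : Set ℝ)
    (hA : ∀ x ∈ Set.Ioo (-π) π, x ≠ 0 → (x ∈ A ↔ x ∈ A'))
    (hB : ∀ x ∈ Set.Ioo (-π) π, x ≠ 0 → (x ∈ B ↔ x ∈ B')) : Trip A B C = Trip A' B' C := by
  have h0 : ∀ᵐ x ∂(volume.restrict (Set.Ioo (-π) π)), x ∈ Set.Ioo (-π) π ∧ x ≠ 0 :=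
    (ae_restrict_mem measurableSet_Ioo).and (ae_restrict_of_ae (Measure.ae_ne volume 0))
  have ind : ∀ {S S' : Set ℝ} {x : ℝ}, (x ∈ S ↔ x ∈ S') →
      S.indicator (1 : ℝ → ENNReal) x = S'.indicator 1 x := by
    intro S S' x h
    by_cases hx : x ∈ S
    · rw [Set.indicator_of_mem hx, Set.indicator_of_mem (h.1 hx)]
    · rw [Set.indicator_of_notMem hx, Set.indicator_of_notMem (fun h' => hx (h.2 h'))]
  unfold Trip
  refine lintegral_congr_ae (h0.mono fun x hx => ?_)
  refine lintegral_congr_ae (h0.mono fun y hy => ?_)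
  simp only
  rw [ind (hA x hx.1 hx.2), ind (hB y hy.1 hy.2)]

lemma trip_left {A C : Set ℝ} (hA : MeasurableSet A) (hC : MeasurableSet C)
    (hper : ∀ z, z + 2 * π ∈ C ↔ z ∈ C) :
    Trip A Set.univ C = ENNReal.ofReal ((volume : Measure (AddCircle (2 * π))).real (rp ⁻¹' C) *
      (volume : Measure (AddCircle (2 * π))).real (rp ⁻¹' A)) := by
  rw [trip_eq hA MeasurableSet.univ hC hper]
  have : ∀ z, rep volume (rp ⁻¹' A) {q | -q ∈ rp ⁻¹' Set.univ} z =
      (volume : Measure (AddCircle (2 * π))).real (rp ⁻¹' A) := by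
    intro z
    unfold rep
    congr 1
    ext q
    simp
  simp only [this, setIntegral_const, smul_eq_mul]

lemma trip_right {B C : Set ℝ} (hB : MeasurableSet B) (hC : MeasurableSet C)
    (hper : ∀ z, z + 2 * π ∈ C ↔ z ∈ C) :
    Trip Set.univ B C = ENNReal.ofReal ((volume : Measure (AddCircle (2 * π))).real (rp ⁻¹' C) *
      (volume : Measure (AddCircle (2 * π))).real (rp ⁻¹' B)) := by
  rw [trip_eq MeasurableSet.univ hB hC hper]
  have : ∀ z, rep volume (rp ⁻¹' Set.univ) {q | -q ∈ rp ⁻¹' B} z =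
      (volume : Measure (AddCircle (2 * π))).real (rp ⁻¹' B) := by
    intro z
    unfold rep
    rw [← measure_sub_right volume (rp_meas hB) z]
    congr 1
    ext q
    simp
  simp only [this, setIntegral_const, smul_eq_mul]

end Final

section Assembly

attribute [local instance] factTwoPi

lemma symmSet_meas (A : Set ℝ) : MeasurableSet (symmSet A) := measurableSet_Ioo

lemma vol_symm {A : Set ℝ} (hA : MeasurableSet A) :
    (volume : Measure (AddCircle (2 * π))).real (rp ⁻¹' (symmSet (Set.Ioo (-π) π ∩ A))) =
    (volume : Measure (AddCircle (2 * π))).real (rp ⁻¹' A) := by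
  obtain ⟨ha, ha'⟩ := symm_bound A
  rw [measureReal_def, measureReal_def, vol_rp hA, vol_rp (symmSet_meas _)]
  have : Set.Ioo (-π) π ∩ symmSet (Set.Ioo (-π) π ∩ A) = symmSet (Set.Ioo (-π) π ∩ A) :=
    Set.inter_eq_right.2 (Set.Ioo_subset_Ioo (by linarith) (by linarith))
  rw [this]
  unfold symmSet
  rw [Real.volume_Ioo, sub_neg_eq_add, add_halves, ENNReal.toReal_ofReal ha]

lemma vol_perSymm {C : Set ℝ} (hC : MeasurableSet C) :
    (volume : Measure (AddCircle (2 * π))).real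
      (rp ⁻¹' (perSet (symmSet (Set.Ioo (-π) π ∩ C)))) =
    (volume : Measure (AddCircle (2 * π))).real (rp ⁻¹' C) := by
  rw [← vol_symm hC]
  unfold symmSet
  rw [rp_perSet (symm_bound C).2]

lemma dom_main {u v : ℝ → ℝ} (hu : Measurable u) (hv : Measurable v)
    (hu0 : ∀ x, 0 ≤ u x) (hv0 : ∀ x, 0 ≤ v x) {C : Set ℝ} (hC : MeasurableSet C)
    (hper : ∀ z, z + 2 * π ∈ C ↔ z ∈ C) :
    Dom ((QM C).map fun p => (u p.1, v p.2))
      ((QM (perSet (symmSet (Set.Ioo (-π) π ∩ C)))).map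
        fun p => (symmRearr u p.1, symmRearr v p.2)) := by
  have hC' := perSet_meas (symmSet_meas (Set.Ioo (-π) π ∩ C))
  have hper' := perSet_per (symmSet (Set.Ioo (-π) π ∩ C))
  have hvC := vol_perSymm hC
  set C' := perSet (symmSet (Set.Ioo (-π) π ∩ C)) with hC'def
  have mu := rearr_meas u
  have mv := rearr_meas v
  have mF : Measurable fun p : ℝ × ℝ => (u p.1, v p.2) := by fun_prop
  have mF' : Measurable fun p : ℝ × ℝ => (symmRearr u p.1, symmRearr v p.2) := by fun_prop
  have m1 : ∀ s : ℝ, MeasurableSet {p : ℝ × ℝ | s < p.1} := fun s =>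
    measurableSet_lt measurable_const measurable_fst
  have m2 : ∀ s : ℝ, MeasurableSet {p : ℝ × ℝ | s < p.2} := fun s =>
    measurableSet_lt measurable_const measurable_snd
  have m3 : ∀ s t : ℝ, MeasurableSet {p : ℝ × ℝ | s < p.1 ∧ t < p.2} := fun s t =>
    by measurability
  have lu : ∀ s : ℝ, MeasurableSet {x | s < u x} := fun s => measurableSet_lt measurable_const hu
  have lv : ∀ s : ℝ, MeasurableSet {x | s < v x} := fun s => measurableSet_lt measurable_const hv
  have lu' : ∀ s : ℝ, MeasurableSet {x | s < symmRearr u x} := fun s =>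
    measurableSet_lt measurable_const mu
  have lv' : ∀ s : ℝ, MeasurableSet {x | s < symmRearr v x} := fun s =>
    measurableSet_lt measurable_const mv
  have tot : QM C Set.univ = QM C' Set.univ := by
    rw [← Set.univ_prod_univ, QM_trip MeasurableSet.univ MeasurableSet.univ hC,
      QM_trip MeasurableSet.univ MeasurableSet.univ hC', trip_left MeasurableSet.univ hC hper,
      trip_left MeasurableSet.univ hC' hper', hvC]
  refine ⟨?_, ?_, fun s => ?_, fun s => ?_, fun s t => ?_⟩
  · rw [Measure.map_apply mF MeasurableSet.univ]
    exact measure_ne_top _ _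
  · rw [Measure.map_apply mF MeasurableSet.univ, Measure.map_apply mF' MeasurableSet.univ]
    exact tot
  · rw [Measure.map_apply mF (m1 s), Measure.map_apply mF' (m1 s)]
    have e1 : (fun p : ℝ × ℝ => (u p.1, v p.2)) ⁻¹' {p | s < p.1} =
        {x | s < u x} ×ˢ Set.univ := by ext p; simp
    have e2 : (fun p : ℝ × ℝ => (symmRearr u p.1, symmRearr v p.2)) ⁻¹' {p | s < p.1} =
        {x | s < symmRearr u x} ×ˢ Set.univ := by ext p; simp
    rw [e1, e2, QM_trip (lu s) MeasurableSet.univ hC, QM_trip (lu' s) MeasurableSet.univ hC',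
      trip_congr (A := {x | s < symmRearr u x}) (A' := symmSet (Set.Ioo (-π) π ∩ {x | s < u x}))
        (B := Set.univ) (B' := Set.univ) C' (fun x h h' => level_all hu hu0 h h' s) (fun x _ _ => Iff.rfl),
      trip_left (lu s) hC hper, trip_left (symmSet_meas _) hC' hper', hvC, vol_symm (lu s)]
  · rw [Measure.map_apply mF (m2 s), Measure.map_apply mF' (m2 s)]
    have e1 : (fun p : ℝ × ℝ => (u p.1, v p.2)) ⁻¹' {p | s < p.2} =
        Set.univ ×ˢ {x | s < v x} := by ext p; simp
    have e2 : (fun p : ℝ × ℝ => (symmRearr u p.1, symmRearr v p.2)) ⁻¹' {p | s < p.2} =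
        Set.univ ×ˢ {x | s < symmRearr v x} := by ext p; simp
    rw [e1, e2, QM_trip MeasurableSet.univ (lv s) hC, QM_trip MeasurableSet.univ (lv' s) hC',
      trip_congr (A := Set.univ) (A' := Set.univ) (B := {x | s < symmRearr v x})
        (B' := symmSet (Set.Ioo (-π) π ∩ {x | s < v x})) C' (fun x _ _ => Iff.rfl)
        (fun x h h' => level_all hv hv0 h h' s),
      trip_right (lv s) hC hper, trip_right (symmSet_meas _) hC' hper', hvC, vol_symm (lv s)]
  · rw [Measure.map_apply mF (m3 s t), Measure.map_apply mF' (m3 s t)]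
    have e1 : (fun p : ℝ × ℝ => (u p.1, v p.2)) ⁻¹' {p | s < p.1 ∧ t < p.2} =
        {x | s < u x} ×ˢ {x | t < v x} := by ext p; simp
    have e2 : (fun p : ℝ × ℝ => (symmRearr u p.1, symmRearr v p.2)) ⁻¹' {p | s < p.1 ∧ t < p.2} =
        {x | s < symmRearr u x} ×ˢ {x | t < symmRearr v x} := by ext p; simp
    rw [e1, e2, QM_trip (lu s) (lv t) hC, QM_trip (lu' s) (lv' t) hC',
      trip_congr (A := {x | s < symmRearr u x}) (A' := symmSet (Set.Ioo (-π) π ∩ {x | s < u x}))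
        (B := {x | t < symmRearr v x})
        (B' := symmSet (Set.Ioo (-π) π ∩ {x | t < v x})) C'
        (fun x h h' => level_all hu hu0 h h' s) (fun x h h' => level_all hv hv0 h h' t)]
    exact riesz (lu s) (lv t) hC hper

lemma layer_g {F : ℝ → ℝ → ENNReal} (hF : Measurable (Function.uncurry F)) {G : ℝ → ℝ}
    (hG : Measurable G) :
    ∫⁻ x in Set.Ioo (-π) π, ∫⁻ y in Set.Ioo (-π) π, F x y * ENNReal.ofReal (G (x - y)) =
      ∫⁻ s in Set.Ioi (0 : ℝ), ∫⁻ p, F p.1 p.2 ∂(QM {z | s < G z}) := by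
  have hF' : Measurable fun p : ℝ × ℝ => F p.1 p.2 := hF
  have hm : Measurable fun p : ℝ × ℝ => F p.1 p.2 * ENNReal.ofReal (G (p.1 - p.2)) := by fun_prop
  have hS : MeasurableSet {q : (ℝ × ℝ) × ℝ | q.2 < G (q.1.1 - q.1.2)} :=
    measurableSet_lt (by fun_prop) (by fun_prop)
  rw [lintegral_lintegral (f := fun x y => F x y * ENNReal.ofReal (G (x - y))) hm.aemeasurable]
  have e1 : ∀ p : ℝ × ℝ, F p.1 p.2 * ENNReal.ofReal (G (p.1 - p.2)) =
      ∫⁻ s in Set.Ioi (0 : ℝ), {q : (ℝ × ℝ) × ℝ | q.2 < G (q.1.1 - q.1.2)}.indicator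
        (fun q => F q.1.1 q.1.2) (p, s) := by
    intro p
    have : ∀ s : ℝ, {q : (ℝ × ℝ) × ℝ | q.2 < G (q.1.1 - q.1.2)}.indicator
        (fun q => F q.1.1 q.1.2) (p, s) =
        (Set.Iio (G (p.1 - p.2))).indicator (fun _ => F p.1 p.2) s := by
      intro s
      by_cases h : s < G (p.1 - p.2)
      · rw [Set.indicator_of_mem (show s ∈ Set.Iio (G (p.1 - p.2)) from h)]
        exact Set.indicator_of_mem (s := {q : (ℝ × ℝ) × ℝ | q.2 < G (q.1.1 - q.1.2)}) h _
      · rw [Set.indicator_of_notMem (show s ∉ Set.Iio (G (p.1 - p.2)) from h)]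
        exact Set.indicator_of_notMem (s := {q : (ℝ × ℝ) × ℝ | q.2 < G (q.1.1 - q.1.2)}) h _
    rw [lintegral_congr this, lintegral_indicator_const measurableSet_Iio,
      Measure.restrict_apply measurableSet_Iio, Set.Iio_inter_Ioi, Real.volume_Ioo, sub_zero]
  rw [lintegral_congr e1, lintegral_lintegral_swap]
  · refine lintegral_congr fun s => ?_
    unfold QM
    have hs : MeasurableSet {p : ℝ × ℝ | p.1 - p.2 ∈ {z | s < G z}} :=
      sub_meas (measurableSet_lt measurable_const hG)
    rw [← lintegral_indicator hs]
    refine lintegral_congr fun p => ?_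
    by_cases h : s < G (p.1 - p.2)
    · rw [Set.indicator_of_mem (show p ∈ {p : ℝ × ℝ | p.1 - p.2 ∈ {z | s < G z}} from h)]
      exact Set.indicator_of_mem (s := {q : (ℝ × ℝ) × ℝ | q.2 < G (q.1.1 - q.1.2)}) h _
    · rw [Set.indicator_of_notMem (show p ∉ {p : ℝ × ℝ | p.1 - p.2 ∈ {z | s < G z}} from h)]
      exact Set.indicator_of_notMem (s := {q : (ℝ × ℝ) × ℝ | q.2 < G (q.1.1 - q.1.2)}) h _
  · have : Measurable fun q : (ℝ × ℝ) × ℝ => F q.1.1 q.1.2 := hF'.comp measurable_fst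
    exact (this.indicator hS).aemeasurable

lemma QM_per {g : ℝ → ℝ} (hg : Measurable g) {s : ℝ} (hs : 0 ≤ s) :
    QM {z | s < perRearr g z} =
      QM (perSet (symmSet (Set.Ioo (-π) π ∩ {z | s < g z}))) := by
  unfold QM
  apply Measure.restrict_congr_set
  set red : ℝ → ℝ := fun z => z - 2 * π * (⌊(z + π) / (2 * π)⌋ : ℝ) with hred
  have mred : Measurable red := by rw [hred]; fun_prop
  have hS : MeasurableSet {p : ℝ × ℝ | red (p.1 - p.2) = 0} :=
    (mred.comp (measurable_fst.sub measurable_snd)) (measurableSet_singleton 0)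
  have hnull : (((volume : Measure ℝ).restrict (Set.Ioo (-π) π)).prod
      ((volume : Measure ℝ).restrict (Set.Ioo (-π) π))) {p : ℝ × ℝ | red (p.1 - p.2) = 0} = 0 := by
    rw [Measure.measure_prod_null hS]
    refine .of_forall fun x => ?_
    have hsub : Prod.mk x ⁻¹' {p : ℝ × ℝ | red (p.1 - p.2) = 0} ⊆
        Set.range fun n : ℤ => x - 2 * π * (n : ℝ) := by
      intro y hy
      have hy' : red (x - y) = 0 := hy
      rw [hred] at hy'
      simp only at hy'
      exact ⟨⌊(x - y + π) / (2 * π)⌋, by simp only; linarith⟩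
    exact ((Set.countable_range _).mono hsub).measure_zero _
  have hae : ∀ᵐ p ∂(((volume : Measure ℝ).restrict (Set.Ioo (-π) π)).prod
      ((volume : Measure ℝ).restrict (Set.Ioo (-π) π))), red (p.1 - p.2) ≠ 0 := by
    rw [ae_iff]
    simpa using hnull
  refine hae.mono fun p hp => ?_
  exact propext (level_pos hg hp hs)

end Assembly

theorem stmt_3
    (J : ℝ → ℝ) (hJnonneg : ∀ t, 0 ≤ J t) (hJconv : ConvexOn ℝ Set.univ J)
    (g : ℝ → ℝ) (hgmeas : Measurable g) (hgnonneg : ∀ x, 0 ≤ g x)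
    (hgper : ∀ x, g (x + 2 * π) = g x) (hgint : IntegrableOn g (Set.Ioo (-π) π))
    (u v : ℝ → ℝ) (humeas : Measurable u) (hvmeas : Measurable v)
    (hu0 : ∀ x, 0 ≤ u x) (hv0 : ∀ x, 0 ≤ v x)
    (hfin : (∫⁻ x in Set.Ioo (-π) π, ∫⁻ y in Set.Ioo (-π) π,
        ENNReal.ofReal (J (u x - v y) * g (x - y))) ≠ ⊤) :
    (∫⁻ x in Set.Ioo (-π) π, ∫⁻ y in Set.Ioo (-π) π,
        ENNReal.ofReal (J (symmRearr u x - symmRearr v y) * perRearr g (x - y))) ≤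
      ∫⁻ x in Set.Ioo (-π) π, ∫⁻ y in Set.Ioo (-π) π,
        ENNReal.ofReal (J (u x - v y) * g (x - y)) := by
  have hcont : Continuous J := by
    have := hJconv.continuousOn_interior
    rw [interior_univ] at this
    exact continuousOn_univ.1 this
  have mJ := hcont.measurable
  have mu := rearr_meas u
  have mv := rearr_meas v
  have mg : Measurable (perRearr g) := by
    have := rearr_meas g
    unfold perRearr periodize
    fun_prop
  simp only [ENNReal.ofReal_mul (hJnonneg _)]
  have mF : Measurable (Function.uncurry fun x y => ENNReal.ofReal (J (u x - v y))) := by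
    unfold Function.uncurry
    fun_prop
  have mF' : Measurable (Function.uncurry fun x y =>
      ENNReal.ofReal (J (symmRearr u x - symmRearr v y))) := by
    unfold Function.uncurry
    fun_prop
  rw [layer_g mF hgmeas, layer_g mF' mg]
  refine setLIntegral_mono' measurableSet_Ioi fun s hs => ?_
  rw [QM_per hgmeas (le_of_lt hs)]
  have hd := dom_main humeas hvmeas hu0 hv0
    (C := {z | s < g z}) (measurableSet_lt measurable_const hgmeas)
    (fun z => by simp only [Set.mem_ofPred_eq, hgper])
  have key := hd.convex hJconv hJnonneg
  rw [lintegral_map (by fun_prop) (by fun_prop), lintegral_map (by fun_prop) (by fun_prop)] at key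
  exact key
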